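/- arXiv:1902.10627 — 4 statements merged into one kernel-verified Lean document; each statement's English description precedes it below -/
import Mathlib

section
/- Let V be a complex vector superspace and D ⊆ V a sub superspace, with D^⊥ = {v̄ ∈ V* : v̄(w) = 0 for all w ∈ D}. Then the left W_V-module F_V(D) = W_V / (Σ_{∂ ∈ D^⊥} W_V ∂ + Σ_{v ∈ D} W_V v) is a simple W_V-module, and it carries a ℤ-grading and a ℤ/2-grading inherited from W_V. Moreover, if D and D' are sub superspaces of V whose even parts satisfy D_0 ≠ D'_0, then F_V(D) and F_V(D') are not isomorphic as W_V-modules. -/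
/-!
Fix an even projection `p` of `V` onto `D`. The generators `V ⊕ V*` of the Weyl superalgebra split
into annihilators `D ⊕ D^⊥`, which kill the vacuum `[1]` of the Fock space, and creators
`ker p ⊕ D*`; the creators supercommute with each other, and the supercommutator of annihilators
with creators is a nondegenerate pairing.

*Simplicity* (`FockData.isSimpleModule`). The Fock space is spanned by products of creators applied
to the vacuum, and annihilators decrease the number of factors. A vector killed by all annihilators
is a multiple of the vacuum (`FockData.mem_span_vac`): for the finitely many creators that occur in
it there is an Euler operator `N = ∑ aᵢ yᵢ`, which counts creators; it kills the vector, whereas all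
terms with at least one creator have positive eigenvalue. Hence every nonzero submodule contains the
vacuum, provided that the latter is nonzero.

*The vacuum is nonzero* (`Splitting.vacuum_ne_zero`). The algebra acts on `S(X) ⊗ Λ(X)` with
`X = V ⊕ V*`, where creators act by multiplication and annihilators by derivations and contractions.
The left ideal `J(D)` kills `1 ⊗ 1`, which is nonzero.

*Gradings* (`exists_int_grading`, `Splitting.exists_parity_grading`). The homogeneous components are
eigenspaces of the automorphisms of the Fock space induced by `v ↦ 2 v`, `φ ↦ φ / 2`, respectively by
the parity involution. Eigenspaces are independent, and their sum contains the vacuum and is stable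
under the generators, so it is everything.

*Non-isomorphism* (`even_le_of_equiv`). An even `v ∈ V` acts locally nilpotently on `F_V(D)` if it
lies in `D`, but no power of it kills the vacuum if it does not. So the even part of `D` is
determined by the isomorphism class of `F_V(D)`.
-/

set_option synthInstance.maxHeartbeats 1000000
set_option maxHeartbeats 1000000

/-!
STATEMENT 0 (Lemma 2.2 of the paper): let `V` be a complex vector superspace (`V = V₀ ⊕ V₁`)
and `D ⊆ V` a sub superspace, with `D^⊥ = {v̄ ∈ V* : v̄(w) = 0 ∀ w ∈ D}`.  Then the left
`W_V`-module (the mixed Fock space)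
`F_V(D) = W_V / (Σ_{∂ ∈ D^⊥} W_V ∂ + Σ_{v ∈ D} W_V v)`
is simple, and it inherits a `ℤ`-grading and a `ℤ/2`-grading from `W_V`.  Moreover if
`D, D'` are sub superspaces with different even parts `D₀ ≠ D'₀` then `F_V(D) ≇ F_V(D')`
as `W_V`-modules.

Here the Weyl superalgebra `W_V = T(V ⊕ V*)/J` is the quotient of the tensor algebra by
the two-sided ideal generated by
`v⊗w - (-1)^{[v][w]} w⊗v`, `v̄⊗w̄ - (-1)^{[v̄][w̄]} w̄⊗v̄`,
`v̄⊗w - (-1)^{[v̄][w]} w⊗v̄ - v̄(w)·1`, for homogeneous `v, w ∈ V`, `v̄, w̄ ∈ V*`.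
It is `ℤ`-graded with `deg V = 1`, `deg V* = -1`, and `ℤ/2`-graded by the parities.
The inherited gradings on `F_V(D)` are characterized by: the vacuum `[1]` has degree `0`
(resp. parity `0`), and the generators act with their degree (resp. parity).
-/

noncomputable section

/-- The sign `(-1)^ε` for `ε : ℤ/2`. -/
def sgn (ε : ZMod 2) : ℂ := if ε = 0 then 1 else -1

variable (Vs : Type) [AddCommGroup Vs] [Module ℂ Vs]

/-- The parity-`ε` subspace of `V = V₀ ⊕ V₁`. -/
def par (V0 V1 : Submodule ℂ Vs) (ε : ZMod 2) : Submodule ℂ Vs :=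
  if ε = 0 then V0 else V1

/-- The parity-`ε` subspace of the dual superspace `V*`: the functionals vanishing on the
opposite-parity part of `V`. -/
def dpar (V0 V1 : Submodule ℂ Vs) (ε : ZMod 2) : Submodule ℂ (Module.Dual ℂ Vs) :=
  (par Vs V0 V1 (ε + 1)).dualAnnihilator

/-- `v ∈ V` as an element of the tensor algebra `T(V ⊕ V*)`. -/
def ιV (v : Vs) : TensorAlgebra ℂ (Vs × Module.Dual ℂ Vs) :=
  TensorAlgebra.ι ℂ (v, 0)

/-- `v̄ ∈ V*` as an element of the tensor algebra `T(V ⊕ V*)`. -/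
def ιF (φ : Module.Dual ℂ Vs) : TensorAlgebra ℂ (Vs × Module.Dual ℂ Vs) :=
  TensorAlgebra.ι ℂ (0, φ)

/-- The defining relations of the Weyl superalgebra `W_V` over the superspace
`V = V₀ ⊕ V₁`. -/
inductive WeylSupRel (V0 V1 : Submodule ℂ Vs) :
    TensorAlgebra ℂ (Vs × Module.Dual ℂ Vs) →
      TensorAlgebra ℂ (Vs × Module.Dual ℂ Vs) → Prop
  | vw (ε η : ZMod 2) (v w : Vs) (hv : v ∈ par Vs V0 V1 ε) (hw : w ∈ par Vs V0 V1 η) :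
      WeylSupRel V0 V1 (ιV Vs v * ιV Vs w) (sgn (ε * η) • (ιV Vs w * ιV Vs v))
  | fg (ε η : ZMod 2) (φ ψ : Module.Dual ℂ Vs)
      (hφ : φ ∈ dpar Vs V0 V1 ε) (hψ : ψ ∈ dpar Vs V0 V1 η) :
      WeylSupRel V0 V1 (ιF Vs φ * ιF Vs ψ) (sgn (ε * η) • (ιF Vs ψ * ιF Vs φ))
  | fv (ε η : ZMod 2) (φ : Module.Dual ℂ Vs) (v : Vs)
      (hφ : φ ∈ dpar Vs V0 V1 ε) (hv : v ∈ par Vs V0 V1 η) :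
      WeylSupRel V0 V1 (ιF Vs φ * ιV Vs v)
        (sgn (ε * η) • (ιV Vs v * ιF Vs φ) +
          algebraMap ℂ (TensorAlgebra ℂ (Vs × Module.Dual ℂ Vs)) (φ v))

/-- The Weyl superalgebra `W_V = T(V ⊕ V*)/J`. -/
abbrev WeylSup (V0 V1 : Submodule ℂ Vs) : Type _ := RingQuot (WeylSupRel Vs V0 V1)

/-- The canonical image of `v ∈ V` in `W_V`. -/
def wV (V0 V1 : Submodule ℂ Vs) (v : Vs) : WeylSup Vs V0 V1 :=
  RingQuot.mkAlgHom ℂ (WeylSupRel Vs V0 V1) (ιV Vs v)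

/-- The canonical image of `v̄ ∈ V*` in `W_V`. -/
def wF (V0 V1 : Submodule ℂ Vs) (φ : Module.Dual ℂ Vs) : WeylSup Vs V0 V1 :=
  RingQuot.mkAlgHom ℂ (WeylSupRel Vs V0 V1) (ιF Vs φ)

/-- The left ideal `J(D) = Σ_{∂ ∈ D^⊥} W_V ∂ + Σ_{v ∈ D} W_V v` of `W_V`. -/
def idealJ (V0 V1 : Submodule ℂ Vs) (D : Submodule ℂ Vs) :
    Submodule (WeylSup Vs V0 V1) (WeylSup Vs V0 V1) :=
  Submodule.span (WeylSup Vs V0 V1)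
    ((wV Vs V0 V1) '' D ∪ (wF Vs V0 V1) '' D.dualAnnihilator)

/-- The mixed Fock space `F_V(D) = W_V/J(D)`, a left `W_V`-module. -/
abbrev FockSup (V0 V1 : Submodule ℂ Vs) (D : Submodule ℂ Vs) : Type _ :=
  WeylSup Vs V0 V1 ⧸ idealJ Vs V0 V1 D

/-! ### Simplicity of abstract Fock modules -/

theorem sgn_mul_self (ε : ZMod 2) : sgn ε * sgn ε = 1 := by
  unfold sgn; split_ifs <;> norm_num

/-- For a pairing that is nondegenerate on the left, finitely many vectors are reproduced by a
finite family `∑ aᵢ ⊗ yᵢ`; this holds because the span of `s` is finite-dimensional and so all of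
its dual is realised by elements of `Y`. -/
theorem exists_dual_family {X Y : Type*} [AddCommGroup X] [Module ℂ X] [AddCommGroup Y]
    [Module ℂ Y] (B : X →ₗ[ℂ] Y →ₗ[ℂ] ℂ) (hB : ∀ x, (∀ y, B x y = 0) → x = 0) (s : Finset X) :
    ∃ (n : ℕ) (a : Fin n → X) (y : Fin n → Y), ∀ x ∈ s, ∑ i, B x (y i) • a i = x := by
  classical
  let A := Submodule.span ℂ (s : Set X)
  let b := Module.finBasis ℂ A
  have hinj : Function.Injective (B ∘ₗ A.subtype) := by
    rw [injective_iff_map_eq_zero]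
    intro x hx
    have := hB x (fun y => by simpa using LinearMap.congr_fun hx y)
    exact Subtype.ext this
  have hsurj := LinearMap.flip_surjective_iff₁.2 hinj
  choose y hy using fun i => hsurj (b.coord i)
  refine ⟨_, fun i => (b i : X), y, fun x hx => ?_⟩
  have h := congrArg A.subtype (b.sum_repr ⟨x, Submodule.subset_span hx⟩)
  rw [map_sum] at h
  refine Eq.trans (Finset.sum_congr rfl fun i _ => ?_) h
  rw [map_smul, ← Module.Basis.coord_apply, ← hy i]
  rfl

section abstractFock

variable {X W F : Type*} [AddCommGroup X] [Module ℂ X] [Ring W] [Algebra ℂ W]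
  [AddCommGroup F] [Module ℂ F] [Module W F]

/-- The `n`-th step of the creation filtration: the span of all products of at most `n`
homogeneous creators applied to the vacuum. -/
def fockFil (w : X →ₗ[ℂ] W) (vac : F) (U : ZMod 2 → Submodule ℂ X) : ℕ → Submodule ℂ F
  | 0 => Submodule.span ℂ {vac}
  | n + 1 => fockFil w vac U n ⊔
      Submodule.span ℂ {x | ∃ ε, ∃ u ∈ U ε, ∃ m ∈ fockFil w vac U n, x = w u • m}

/-- The part of the structure of a Fock module on which simplicity depends. The generators
`w : X → W` split into creators `U ε` and annihilators `Y ε` of parity `ε`; the creators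
supercommute, an annihilator and a creator of equal parity supercommute up to the scalar
`β ε u y` and otherwise supercommute, the annihilators kill the vacuum, the vacuum generates `F`,
and `β ε` has no left kernel on `U ε × Y ε`. -/
structure FockData (w : X →ₗ[ℂ] W) (vac : F) (U Y : ZMod 2 → Submodule ℂ X)
    (β : ZMod 2 → X →ₗ[ℂ] X →ₗ[ℂ] ℂ) : Prop where
  rel_yu : ∀ ε η, ∀ y ∈ Y ε, ∀ u ∈ U η, w y * w u =
    sgn (ε * η) • (w u * w y) + algebraMap ℂ W (if ε = η then β ε u y else 0)
  rel_uu : ∀ ε η, ∀ u ∈ U ε, ∀ u' ∈ U η, w u * w u' = sgn (ε * η) • (w u' * w u)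
  decomp : ∀ x, x ∈ (U 0 ⊔ U 1) ⊔ (Y 0 ⊔ Y 1)
  ann : ∀ ε, ∀ y ∈ Y ε, w y • vac = 0
  gen : ∀ S : Submodule ℂ F, vac ∈ S → (∀ x, ∀ s ∈ S, w x • s ∈ S) → S = ⊤
  nondeg : ∀ ε, ∀ u ∈ U ε, (∀ y ∈ Y ε, β ε u y = 0) → u = 0

variable {w : X →ₗ[ℂ] W} {vac : F} {U Y : ZMod 2 → Submodule ℂ X}
    {β : ZMod 2 → X →ₗ[ℂ] X →ₗ[ℂ] ℂ}

theorem zmod2_cases (ε : ZMod 2) : ε = 0 ∨ ε = 1 := by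
  revert ε; decide

theorem fockFil_create {n : ℕ} {ε : ZMod 2} {u : X} (hu : u ∈ U ε) {m : F}
    (hm : m ∈ fockFil w vac U n) : w u • m ∈ fockFil w vac U (n + 1) :=
  Submodule.mem_sup_right (Submodule.subset_span ⟨ε, u, hu, m, hm, rfl⟩)

theorem fockFil_mono : Monotone (fockFil w vac U) :=
  monotone_nat_of_le_succ fun _ => le_sup_left

/-- The Euler operator `N = ∑ aᵢ yᵢ` of a dual family of creators and annihilators of parity `ε`:
it kills the common kernel of the annihilators of parity `ε`, and `[N, u] = u` for the creators
`u ∈ s` of that parity, while it commutes with those of opposite parity. -/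
theorem FockData.exists_euler_parity (h : FockData w vac U Y β) (ε : ZMod 2) (s : Finset X) :
    ∃ N : W, (∀ x : F, (∀ y ∈ Y ε, w y • x = 0) → N • x = 0) ∧
      ∀ η, ∀ u ∈ s, u ∈ U η → N * w u = w u * N + (if ε = η then w u else 0) := by
  classical
  obtain ⟨n, a, y, hay⟩ := exists_dual_family
    ((β ε).domRestrict₁₂ (U ε) (Y ε))
    (fun u hu => Subtype.ext (h.nondeg ε u u.2 fun y hy => hu ⟨y, hy⟩))
    (s.subtype (· ∈ U ε))
  refine ⟨∑ i, w (a i) * w (y i), fun x hx => ?_, fun η u hus hu => ?_⟩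
  · rw [Finset.sum_smul]
    exact Finset.sum_eq_zero fun i _ => by rw [mul_smul, hx _ (y i).2, smul_zero]
  · have step : ∀ i, w (a i) * w (y i) * w u = w u * (w (a i) * w (y i)) +
        (if ε = η then β ε u (y i) else 0) • w (a i) := by
      intro i
      rw [mul_assoc, h.rel_yu ε η _ (y i).2 u hu, mul_add, mul_smul_comm, ← mul_assoc,
        h.rel_uu ε η _ (a i).2 u hu, smul_mul_assoc, smul_smul, sgn_mul_self, one_smul,
        mul_assoc, ← Algebra.commutes, Algebra.smul_def]
    rw [Finset.sum_mul, Finset.mul_sum, Finset.sum_congr rfl fun i _ => step i,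
      Finset.sum_add_distrib]
    congr 1
    split_ifs with heq
    · subst heq
      have := congrArg Subtype.val (hay ⟨u, hu⟩ (by simpa using hus))
      conv_rhs => rw [← show _ = u from this]
      simp only [Submodule.coe_sum, Submodule.coe_smul, map_sum, map_smul]
      rfl
    · simp

/-- An Euler operator for finitely many creators of both parities. As the number of creators in
`U` may be infinite, `N` depends on the finite set `s`. -/
theorem FockData.exists_euler (h : FockData w vac U Y β) (s : Finset X) :
    ∃ N : W, (∀ x : F, (∀ ε, ∀ y ∈ Y ε, w y • x = 0) → N • x = 0) ∧
      ∀ η, ∀ u ∈ s, u ∈ U η → N * w u = w u * N + w u := by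
  obtain ⟨N0, h0, h0'⟩ := h.exists_euler_parity 0 s
  obtain ⟨N1, h1, h1'⟩ := h.exists_euler_parity 1 s
  refine ⟨N0 + N1, fun x hx => ?_, fun η u hus hu => ?_⟩
  · rw [add_smul, h0 x (hx 0), h1 x (hx 1), add_zero]
  · rw [add_mul, h0' η u hus hu, h1' η u hus hu, mul_add]
    have : (if (0 : ZMod 2) = η then w u else 0) + (if (1 : ZMod 2) = η then w u else 0) = w u := by
      rcases zmod2_cases η with rfl | rfl <;> simp
    rw [add_add_add_comm, this]

variable [IsScalarTower ℂ W F]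

/-- Scalars commute with the action of `W`, deduced from the scalar tower alone. -/
theorem smul_comm_scalar (a : W) (c : ℂ) (x : F) : a • c • x = c • a • x := by
  rw [← algebraMap_smul W c x, ← algebraMap_smul W c (a • x), smul_smul, smul_smul,
    Algebra.commutes]

/-- An annihilator lowers the creation filtration by one step. -/
theorem FockData.annihilate (h : FockData w vac U Y β) {ε : ZMod 2} {y : X} (hy : y ∈ Y ε)
    (n : ℕ) : (∀ x ∈ fockFil w vac U 0, w y • x = 0) ∧
      ∀ x ∈ fockFil w vac U (n + 1), w y • x ∈ fockFil w vac U n := by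
  have h0 : ∀ x ∈ fockFil w vac U 0, w y • x = 0 := by
    intro x hx
    obtain ⟨c, rfl⟩ := Submodule.mem_span_singleton.1 hx
    rw [smul_comm_scalar, h.ann ε y hy, smul_zero]
  refine ⟨h0, ?_⟩
  let T := Algebra.lsmul ℂ ℂ F (w y)
  induction n with
  | zero =>
    suffices H : fockFil w vac U 1 ≤ (fockFil w vac U 0).comap T from H
    refine sup_le (fun x hx => ?_) (Submodule.span_le.2 ?_)
    · change w y • x ∈ fockFil w vac U 0
      rw [h0 x hx]; exact zero_mem _
    · rintro _ ⟨η, u, hu, m, hm, rfl⟩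
      change w y • w u • m ∈ fockFil w vac U 0
      rw [smul_smul, h.rel_yu ε η y hy u hu, add_smul, smul_assoc, mul_smul, h0 m hm, smul_zero,
        smul_zero, zero_add, algebraMap_smul]
      exact Submodule.smul_mem _ _ hm
  | succ n ih =>
    suffices H : fockFil w vac U (n + 2) ≤ (fockFil w vac U (n + 1)).comap T from H
    refine sup_le (fun x hx => ?_) (Submodule.span_le.2 ?_)
    · exact fockFil_mono (Nat.le_succ n) (ih x hx)
    · rintro _ ⟨η, u, hu, m, hm, rfl⟩
      change w y • w u • m ∈ fockFil w vac U (n + 1)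
      rw [smul_smul, h.rel_yu ε η y hy u hu, add_smul, smul_assoc, mul_smul, algebraMap_smul]
      exact add_mem (Submodule.smul_mem _ _ (fockFil_create hu (ih m hm)))
        (Submodule.smul_mem _ _ hm)

theorem FockData.exists_mem_fil (h : FockData w vac U Y β) (x : F) :
    ∃ n, x ∈ fockFil w vac U n := by
  have hdir : Directed (· ≤ ·) (fockFil w vac U) := fockFil_mono.directed_le
  have key : (⨆ n, fockFil w vac U n) = ⊤ := by
    refine h.gen _ (Submodule.mem_iSup_of_mem 0 (Submodule.mem_span_singleton_self _)) ?_
    intro x s hs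
    rw [Submodule.mem_iSup_of_directed _ hdir] at hs ⊢
    obtain ⟨n, hn⟩ := hs
    refine ⟨n + 1, ?_⟩
    let R : Submodule ℂ X := (fockFil w vac U (n + 1)).comap
      ((LinearMap.toSpanSingleton W F s).restrictScalars ℂ ∘ₗ w)
    suffices H : (U 0 ⊔ U 1) ⊔ (Y 0 ⊔ Y 1) ≤ R from H (h.decomp x)
    have hU : ∀ ε, U ε ≤ R := fun ε u hu => fockFil_create hu hn
    have hY : ∀ ε, Y ε ≤ R := fun ε y hy =>
      fockFil_mono (Nat.le_succ n)
        ((h.annihilate hy n).2 s (fockFil_mono (Nat.le_succ n) hn))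
    exact sup_le (sup_le (hU 0) (hU 1)) (sup_le (hY 0) (hY 1))
  have : x ∈ ⨆ n, fockFil w vac U n := key ▸ Submodule.mem_top
  exact (Submodule.mem_iSup_of_directed _ hdir).1 this

/-- Modulo the vacuum, a vector of the filtration is a sum of eigenvectors with positive integral
eigenvalue for every operator `N` that behaves like an Euler operator on the finitely many
creators needed to write the vector down. -/
theorem FockData.eigen_decomp (n : ℕ) : ∀ x ∈ fockFil w vac U n,
    ∃ s : Finset X, ∀ N : W, N • vac = 0 →
      (∀ η, ∀ u ∈ s, u ∈ U η → N * w u = w u * N + w u) →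
      ∃ c : ℂ, x - c • vac ∈
        ⨆ k : ℕ, (Algebra.lsmul ℂ ℂ F N).eigenspace ((k : ℂ) + 1) := by
  classical
  induction n with
  | zero =>
    intro x hx
    obtain ⟨c, rfl⟩ := Submodule.mem_span_singleton.1 hx
    exact ⟨∅, fun N _ _ => ⟨c, by simp⟩⟩
  | succ n ih =>
    intro x hx
    obtain ⟨x₁, h₁, x₂, h₂, rfl⟩ := Submodule.mem_sup.1 hx
    have hadd : ∀ {x y : F}, (∃ s : Finset X, ∀ N : W, N • vac = 0 →
        (∀ η, ∀ u ∈ s, u ∈ U η → N * w u = w u * N + w u) → ∃ c : ℂ, x - c • vac ∈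
        ⨆ k : ℕ, (Algebra.lsmul ℂ ℂ F N).eigenspace ((k : ℂ) + 1)) →
        (∃ s : Finset X, ∀ N : W, N • vac = 0 →
        (∀ η, ∀ u ∈ s, u ∈ U η → N * w u = w u * N + w u) → ∃ c : ℂ, y - c • vac ∈
        ⨆ k : ℕ, (Algebra.lsmul ℂ ℂ F N).eigenspace ((k : ℂ) + 1)) →
        (∃ s : Finset X, ∀ N : W, N • vac = 0 →
        (∀ η, ∀ u ∈ s, u ∈ U η → N * w u = w u * N + w u) → ∃ c : ℂ, x + y - c • vac ∈
        ⨆ k : ℕ, (Algebra.lsmul ℂ ℂ F N).eigenspace ((k : ℂ) + 1)) := by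
      rintro x y ⟨s, hs⟩ ⟨t, ht⟩
      refine ⟨s ∪ t, fun N hN hu => ?_⟩
      obtain ⟨c, hc⟩ := hs N hN fun η u h => hu η u (Finset.mem_union_left _ h)
      obtain ⟨d, hd⟩ := ht N hN fun η u h => hu η u (Finset.mem_union_right _ h)
      refine ⟨c + d, ?_⟩
      have := add_mem hc hd
      rwa [show x - c • vac + (y - d • vac) = x + y - (c + d) • vac by module] at this
    refine hadd (ih x₁ h₁) ?_
    clear hx h₁
    induction h₂ using Submodule.span_induction with
    | zero => exact ⟨∅, fun N _ _ => ⟨0, by simp⟩⟩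
    | add x y _ _ hx hy => exact hadd hx hy
    | smul a x _ hx =>
      obtain ⟨s, hs⟩ := hx
      refine ⟨s, fun N hN hu => ?_⟩
      obtain ⟨c, hc⟩ := hs N hN hu
      refine ⟨a * c, ?_⟩
      have := Submodule.smul_mem _ a hc
      rwa [smul_sub, smul_smul] at this
    | mem x hx =>
      obtain ⟨ε, u, hu, m, hm, rfl⟩ := hx
      obtain ⟨s, hs⟩ := ih m hm
      refine ⟨insert u s, fun N hN hu' => ⟨0, ?_⟩⟩
      obtain ⟨c, hc⟩ := hs N hN fun η v h => hu' η v (Finset.mem_insert_of_mem h)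
      have hNu := hu' ε u (Finset.mem_insert_self _ _) hu
      -- multiplication by `u` shifts the eigenvalues of `N` by one
      have shift : ∀ (μ : ℂ) (z : F), N • z = μ • z → N • w u • z = (μ + 1) • w u • z := by
        intro μ z hz
        rw [smul_smul, hNu, add_smul, mul_smul, hz, smul_comm_scalar, add_smul, one_smul]
      rw [zero_smul, sub_zero, show w u • m = w u • (m - c • vac) + c • w u • vac by
        rw [smul_sub, smul_comm_scalar, sub_add_cancel]]
      refine add_mem ?_ (Submodule.smul_mem _ _ (Submodule.mem_iSup_of_mem 0 ?_))
      · have : (⨆ k : ℕ, (Algebra.lsmul ℂ ℂ F N).eigenspace ((k : ℂ) + 1)) ≤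
            (⨆ k : ℕ, (Algebra.lsmul ℂ ℂ F N).eigenspace ((k : ℂ) + 1)).comap
              (Algebra.lsmul ℂ ℂ F (w u)) := by
          refine iSup_le fun k z hz => Submodule.mem_iSup_of_mem (k + 1) ?_
          rw [Module.End.mem_eigenspace_iff] at hz ⊢
          have := shift _ z hz
          push_cast
          exact this
        exact this hc
      · rw [Module.End.mem_eigenspace_iff]
        have := shift 0 vac (by rw [hN, zero_smul])
        simpa using this

/-- The only vectors killed by all annihilators are the multiples of the vacuum: an Euler operator
acts on such a vector by `0`, but on its part away from the vacuum with positive eigenvalues. -/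
theorem FockData.mem_span_vac (h : FockData w vac U Y β) (x : F)
    (hx : ∀ ε, ∀ y ∈ Y ε, w y • x = 0) : x ∈ Submodule.span ℂ {vac} := by
  obtain ⟨n, hn⟩ := h.exists_mem_fil x
  obtain ⟨s, hs⟩ := FockData.eigen_decomp n x hn
  obtain ⟨N, hN, hNu⟩ := h.exists_euler s
  have hv := hN vac h.ann
  obtain ⟨c, hc⟩ := hs N hv hNu
  have h0 : x - c • vac ∈ (Algebra.lsmul ℂ ℂ F N).eigenspace 0 := by
    rw [Module.End.mem_eigenspace_iff]
    change N • (x - c • vac) = _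
    rw [smul_sub, smul_comm_scalar, hv, hN x hx]; simp
  have hle : (⨆ k : ℕ, (Algebra.lsmul ℂ ℂ F N).eigenspace ((k : ℂ) + 1)) ≤
      ⨆ μ, ⨆ (_ : μ ≠ (0 : ℂ)), (Algebra.lsmul ℂ ℂ F N).eigenspace μ :=
    iSup_le fun k => le_iSup₂_of_le ((k : ℂ) + 1) (Nat.cast_add_one_ne_zero k) le_rfl
  have := Submodule.disjoint_def.1
    (Module.End.eigenspaces_iSupIndep (Algebra.lsmul ℂ ℂ F N) 0) _ h0 (hle hc)
  rw [sub_eq_zero.1 this]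
  exact Submodule.smul_mem _ _ (Submodule.mem_span_singleton_self _)

/-- A Fock module with nonzero vacuum is simple: applying annihilators to a nonzero element of a
submodule as long as the result is nonzero ends at a nonzero multiple of the vacuum. -/
theorem FockData.isSimpleModule (h : FockData w vac U Y β) (hv : vac ≠ 0) :
    IsSimpleModule W F := by
  have main : ∀ K : Submodule W F, ∀ n, ∀ x ∈ fockFil w vac U n, x ∈ K → x ≠ 0 → vac ∈ K := by
    intro K
    have scal : ∀ x ∈ Submodule.span ℂ {vac}, x ∈ K → x ≠ 0 → vac ∈ K := by
      intro x hx hK h0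
      obtain ⟨c, rfl⟩ := Submodule.mem_span_singleton.1 hx
      have hc : c ≠ 0 := by rintro rfl; simp at h0
      have := K.smul_of_tower_mem c⁻¹ hK
      rwa [smul_smul, inv_mul_cancel₀ hc, one_smul] at this
    intro n
    induction n with
    | zero => exact scal
    | succ n ih =>
      intro x hx hK h0
      by_cases hk : ∀ ε, ∀ y ∈ Y ε, w y • x = 0
      · exact scal x (h.mem_span_vac x hk) hK h0
      · push Not at hk
        obtain ⟨ε, y, hy, hne⟩ := hk
        exact ih _ ((h.annihilate hy n).2 x hx) (K.smul_mem _ hK) hne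
  have : Nontrivial F := ⟨⟨vac, 0, hv⟩⟩
  rw [isSimpleModule_iff]
  refine { eq_bot_or_eq_top := fun K => or_iff_not_imp_left.2 fun hK => ?_ }
  obtain ⟨x, hx, h0⟩ := K.exists_mem_ne_zero_of_ne_bot hK
  obtain ⟨n, hn⟩ := h.exists_mem_fil x
  have hvK := main K n x hn hx h0
  have := h.gen (K.restrictScalars ℂ) hvK fun x s hs => K.smul_mem _ hs
  exact (Submodule.restrictScalars_eq_top_iff ℂ W F).1 this

end abstractFock

/-! ### The Weyl superalgebra and its Fock modules -/

theorem zmod2_add_one {ε η : ZMod 2} (h : ε ≠ η) : ε + 1 = η := by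
  revert ε η; decide

theorem zmod2_add_one_add_one (ε : ZMod 2) : ε + 1 + 1 = ε := by
  revert ε; decide

section concrete

variable {Vs} {V0 V1 D : Submodule ℂ Vs}

/-- The canonical linear map `V ⊕ V* → W_V`. -/
def wLin (V0 V1 : Submodule ℂ Vs) : Vs × Module.Dual ℂ Vs →ₗ[ℂ] WeylSup Vs V0 V1 :=
  (RingQuot.mkAlgHom ℂ (WeylSupRel Vs V0 V1)).toLinearMap ∘ₗ TensorAlgebra.ι ℂ

theorem wLin_eq (x : Vs × Module.Dual ℂ Vs) :
    wLin V0 V1 x = wV Vs V0 V1 x.1 + wF Vs V0 V1 x.2 := by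
  change wLin V0 V1 x = wLin V0 V1 (x.1, 0) + wLin V0 V1 (0, x.2)
  rw [← map_add]; simp

/-- The part of parity `ε` of the superspace `V ⊕ V*`. -/
def homog (V0 V1 : Submodule ℂ Vs) (ε : ZMod 2) : Submodule ℂ (Vs × Module.Dual ℂ Vs) :=
  (par Vs V0 V1 ε).prod (dpar Vs V0 V1 ε)

/-- The scalar `x̄(y) - s ȳ(x)` on `V ⊕ V*`; for `s = (-1)^{[x][y]}` it is the supercommutator of
the homogeneous generators `x` and `y`. -/
def superForm (s : ℂ) (x y : Vs × Module.Dual ℂ Vs) : ℂ := x.2 y.1 - s * y.2 x.1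

/-- The three families of defining relations, combined into one on `V ⊕ V*`. -/
theorem wLin_rel {ε η : ZMod 2} {x y : Vs × Module.Dual ℂ Vs} (hx : x ∈ homog V0 V1 ε)
    (hy : y ∈ homog V0 V1 η) : wLin V0 V1 x * wLin V0 V1 y =
      sgn (ε * η) • (wLin V0 V1 y * wLin V0 V1 x) +
        algebraMap ℂ _ (superForm (sgn (ε * η)) x y) := by
  have h1 := RingQuot.mkAlgHom_rel ℂ (WeylSupRel.vw (Vs := Vs) ε η x.1 y.1 hx.1 hy.1)
  have h2 := RingQuot.mkAlgHom_rel ℂ (WeylSupRel.fg (Vs := Vs) ε η x.2 y.2 hx.2 hy.2)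
  have h3 := RingQuot.mkAlgHom_rel ℂ (WeylSupRel.fv (Vs := Vs) ε η x.2 y.1 hx.2 hy.1)
  have h4 := RingQuot.mkAlgHom_rel ℂ (WeylSupRel.fv (Vs := Vs) η ε y.2 x.1 hy.2 hx.1)
  simp only [map_mul, map_smul, map_add, AlgHom.commutes] at h1 h2 h3 h4
  change wV Vs V0 V1 _ * wV Vs V0 V1 _ = _ • (wV Vs V0 V1 _ * wV Vs V0 V1 _) at h1
  change wF Vs V0 V1 _ * wF Vs V0 V1 _ = _ • (wF Vs V0 V1 _ * wF Vs V0 V1 _) at h2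
  change wF Vs V0 V1 _ * wV Vs V0 V1 _ = _ • (wV Vs V0 V1 _ * wF Vs V0 V1 _) + _ at h3
  change wF Vs V0 V1 _ * wV Vs V0 V1 _ = _ • (wV Vs V0 V1 _ * wF Vs V0 V1 _) + _ at h4
  rw [wLin_eq, wLin_eq, mul_add, add_mul, add_mul, h1, h2, h3, mul_add, add_mul, add_mul, h4]
  rw [mul_comm η ε]
  simp only [smul_add, smul_smul, sgn_mul_self, superForm, Algebra.algebraMap_eq_smul_one]
  module

/-- The universal property of `W_V`, in terms of the combined relation. -/
theorem exists_lift {A : Type*} [Ring A] [Algebra ℂ A] (T : Vs × Module.Dual ℂ Vs →ₗ[ℂ] A)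
    (hT : ∀ ε η, ∀ x ∈ homog V0 V1 ε, ∀ y ∈ homog V0 V1 η,
      T x * T y = sgn (ε * η) • (T y * T x) + algebraMap ℂ A (superForm (sgn (ε * η)) x y)) :
    ∃ ρ : WeylSup Vs V0 V1 →ₐ[ℂ] A, ∀ x, ρ (wLin V0 V1 x) = T x := by
  refine ⟨RingQuot.liftAlgHom ℂ ⟨TensorAlgebra.lift ℂ T, ?_⟩, fun x => ?_⟩
  · intro a b hab
    induction hab with
    | vw ε η v w hv hw =>
      simpa [ιV, superForm] using hT ε η (v, 0) ⟨hv, zero_mem _⟩ (w, 0) ⟨hw, zero_mem _⟩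
    | fg ε η v w hv hw =>
      simpa [ιF, superForm] using hT ε η (0, v) ⟨zero_mem _, hv⟩ (0, w) ⟨zero_mem _, hw⟩
    | fv ε η v w hv hw =>
      simpa [ιF, ιV, superForm] using hT ε η (0, v) ⟨zero_mem _, hv⟩ (w, 0) ⟨hw, zero_mem _⟩
  · rw [wLin, LinearMap.comp_apply, AlgHom.toLinearMap_apply,
      RingQuot.liftAlgHom_mkAlgHom_apply, TensorAlgebra.lift_ι_apply]

/-- The vacuum vector, the class of `1` in `F_V(D)`. -/
def vacuum (V0 V1 D : Submodule ℂ Vs) : FockSup Vs V0 V1 D := (idealJ Vs V0 V1 D).mkQ 1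

theorem weyl_stable {F : Type*} [AddCommGroup F] [Module ℂ F] [Module (WeylSup Vs V0 V1) F]
    [IsScalarTower ℂ (WeylSup Vs V0 V1) F] (S : Submodule ℂ F)
    (hS : ∀ x, ∀ s ∈ S, wLin V0 V1 x • s ∈ S) (a : WeylSup Vs V0 V1) :
    ∀ s ∈ S, a • s ∈ S := by
  obtain ⟨t, rfl⟩ := RingQuot.mkAlgHom_surjective ℂ (WeylSupRel Vs V0 V1) a
  induction t using TensorAlgebra.induction with
  | algebraMap r =>
    intro s hs
    rw [AlgHom.commutes, algebraMap_smul]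
    exact S.smul_mem _ hs
  | ι x => exact hS x
  | mul a b ha hb => intro s hs; rw [map_mul, mul_smul]; exact ha _ (hb _ hs)
  | add a b ha hb => intro s hs; rw [map_add, add_smul]; exact add_mem (ha _ hs) (hb _ hs)

/-- The vacuum generates `F_V(D)` under the action of `V ⊕ V*`. -/
theorem fock_gen (S : Submodule ℂ (FockSup Vs V0 V1 D)) (h1 : vacuum V0 V1 D ∈ S)
    (hS : ∀ x, ∀ s ∈ S, wLin V0 V1 x • s ∈ S) : S = ⊤ := by
  rw [eq_top_iff]
  rintro m -
  obtain ⟨a, rfl⟩ := (idealJ Vs V0 V1 D).mkQ_surjective m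
  have := weyl_stable S hS a _ h1
  rwa [vacuum, ← map_smul, smul_eq_mul, mul_one] at this

theorem mem_idealJ_of {y : Vs × Module.Dual ℂ Vs} (hy : y ∈ D.prod D.dualAnnihilator) :
    wLin V0 V1 y ∈ idealJ Vs V0 V1 D := by
  rw [wLin_eq]
  exact add_mem (Submodule.subset_span (Or.inl ⟨_, hy.1, rfl⟩))
    (Submodule.subset_span (Or.inr ⟨_, hy.2, rfl⟩))

theorem ann_vacuum {y : Vs × Module.Dual ℂ Vs} (hy : y ∈ D.prod D.dualAnnihilator) :
    wLin V0 V1 y • vacuum V0 V1 D = 0 := by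
  rw [vacuum, ← map_smul, smul_eq_mul, mul_one, Submodule.mkQ_apply,
    Submodule.Quotient.mk_eq_zero]
  exact mem_idealJ_of hy

/-- Projections adapted to the superspace structure: `π ε` is the projection of `V` onto its part
of parity `ε`, which preserves `D`, and `p` is an even projection of `V` onto `D`. -/
structure Splitting (V0 V1 D : Submodule ℂ Vs) (π : ZMod 2 → Module.End ℂ Vs)
    (p : Module.End ℂ Vs) : Prop where
  π_mem : ∀ ε v, π ε v ∈ par Vs V0 V1 ε
  π_id : ∀ ε, ∀ v ∈ par Vs V0 V1 ε, π ε v = v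
  π_zero : ∀ ε, ∀ v ∈ par Vs V0 V1 (ε + 1), π ε v = 0
  π_add : ∀ v, π 0 v + π 1 v = v
  π_D : ∀ ε, ∀ v ∈ D, π ε v ∈ D
  p_mem : ∀ v, p v ∈ D
  p_id : ∀ v ∈ D, p v = v
  p_par : ∀ ε, ∀ v ∈ par Vs V0 V1 ε, p v ∈ par Vs V0 V1 ε

theorem exists_splitting (hcompl : IsCompl V0 V1) (hD : D = D ⊓ V0 ⊔ D ⊓ V1) :
    ∃ π p, Splitting V0 V1 D π p := by
  obtain ⟨π₀, h00, h01, h0m⟩ : ∃ π₀ : Module.End ℂ Vs, (∀ v ∈ V0, π₀ v = v) ∧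
      (∀ v ∈ V1, π₀ v = 0) ∧ ∀ v, π₀ v ∈ V0 ∧ v - π₀ v ∈ V1 := by
    have e00 : ∀ v ∈ V0, (V0.subtype ∘ₗ V0.projectionOnto V1 hcompl) v = v := fun v hv =>
      congrArg Subtype.val (Submodule.projectionOnto_apply_left hcompl ⟨v, hv⟩)
    have e01 : ∀ v ∈ V1, (V0.subtype ∘ₗ V0.projectionOnto V1 hcompl) v = 0 := fun v hv =>
      congrArg Subtype.val (Submodule.projectionOnto_apply_right hcompl ⟨v, hv⟩)
    refine ⟨V0.subtype ∘ₗ V0.projectionOnto V1 hcompl, e00, e01, fun v => ?_⟩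
    have hv : v ∈ V0 ⊔ V1 := hcompl.sup_eq_top ▸ Submodule.mem_top
    obtain ⟨a, ha, b, hb, rfl⟩ := Submodule.mem_sup.1 hv
    rw [map_add, e00 a ha, e01 b hb]
    simpa using ⟨ha, hb⟩
  obtain ⟨r, hr⟩ := D.subtype.exists_leftInverse_of_injective D.ker_subtype
  have hr' : ∀ v ∈ D, (r v : Vs) = v := fun v hv => by
    simpa using congrArg Subtype.val (LinearMap.congr_fun hr ⟨v, hv⟩)
  have hπD : ∀ v ∈ D, π₀ v ∈ D := by
    intro v hv
    rw [hD] at hv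
    obtain ⟨a, ha, b, hb, rfl⟩ := Submodule.mem_sup.1 hv
    rw [map_add, h00 a ha.2, h01 b hb.2, add_zero]
    exact ha.1
  let π : ZMod 2 → Module.End ℂ Vs := fun ε => if ε = 0 then π₀ else 1 - π₀
  have e0 : π 0 = π₀ := rfl
  have e1 : π 1 = 1 - π₀ := rfl
  have p0 : par Vs V0 V1 0 = V0 := rfl
  have p1 : par Vs V0 V1 1 = V1 := rfl
  have p1' : par Vs V0 V1 (0 + 1) = V1 := rfl
  have p0' : par Vs V0 V1 (1 + 1) = V0 := rfl
  have hmem : ∀ ε v, π ε v ∈ par Vs V0 V1 ε := by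
    intro ε v
    rcases zmod2_cases ε with rfl | rfl
    · rw [e0]; exact (h0m v).1
    · rw [e1]; exact (h0m v).2
  have hid : ∀ ε, ∀ v ∈ par Vs V0 V1 ε, π ε v = v := by
    intro ε v hv
    rcases zmod2_cases ε with rfl | rfl
    · rw [e0]; exact h00 v hv
    · rw [e1]; simp [h01 v hv]
  have hzero : ∀ ε, ∀ v ∈ par Vs V0 V1 (ε + 1), π ε v = 0 := by
    intro ε v hv
    rcases zmod2_cases ε with rfl | rfl
    · rw [e0]; exact h01 v hv
    · rw [e1]; simp [h00 v hv]
  have hDD : ∀ ε, ∀ v ∈ D, π ε v ∈ D := by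
    intro ε v hv
    rcases zmod2_cases ε with rfl | rfl
    · rw [e0]; exact hπD v hv
    · rw [e1]; exact sub_mem hv (hπD v hv)
  have hadd : ∀ v, π 0 v + π 1 v = v := fun v => by rw [e0, e1]; simp
  -- an arbitrary projection onto `D`, averaged over the parity decomposition
  refine ⟨π, π 0 ∘ₗ D.subtype ∘ₗ r ∘ₗ π 0 + π 1 ∘ₗ D.subtype ∘ₗ r ∘ₗ π 1,
    hmem, hid, hzero, hadd, hDD, fun v => ?_, fun v hv => ?_, fun ε v hv => ?_⟩
  · exact add_mem (hDD 0 _ (r _).2) (hDD 1 _ (r _).2)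
  · simp only [LinearMap.add_apply, LinearMap.comp_apply, Submodule.subtype_apply]
    rw [hr' _ (hDD 0 v hv), hr' _ (hDD 1 v hv), hid 0 _ (hmem 0 v), hid 1 _ (hmem 1 v), hadd]
  · simp only [LinearMap.add_apply, LinearMap.comp_apply, Submodule.subtype_apply]
    rcases zmod2_cases ε with rfl | rfl
    · rw [hzero 1 v hv]; simpa using hmem 0 _
    · rw [hzero 0 v hv]; simpa using hmem 1 _

namespace Splitting

variable {π : ZMod 2 → Module.End ℂ Vs} {p : Module.End ℂ Vs}

theorem p_comm (h : Splitting V0 V1 D π p) (ε : ZMod 2) (v : Vs) : p (π ε v) = π ε (p v) := by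
  conv_rhs => rw [← h.π_add v, map_add, map_add]
  have hid := h.π_id ε _ (h.p_par ε _ (h.π_mem ε v))
  rcases zmod2_cases ε with rfl | rfl
  · rw [hid, h.π_zero 0 _ (h.p_par 1 _ (h.π_mem 1 v)), add_zero]
  · rw [hid, h.π_zero 1 _ (h.p_par 0 _ (h.π_mem 0 v)), zero_add]

theorem dual_π (h : Splitting V0 V1 D π p) {ε : ZMod 2} {φ : Module.Dual ℂ Vs}
    (hφ : φ ∈ dpar Vs V0 V1 ε) (v : Vs) : φ (π ε v) = φ v := by
  conv_rhs => rw [← h.π_add v, map_add]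
  rw [dpar, Submodule.mem_dualAnnihilator] at hφ
  rcases zmod2_cases ε with rfl | rfl
  · rw [hφ _ (h.π_mem 1 v), add_zero]
  · rw [hφ _ (h.π_mem 0 v), zero_add]

theorem dual_mem (h : Splitting V0 V1 D π p) {ε : ZMod 2} (φ : Module.Dual ℂ Vs) :
    φ ∘ₗ π ε ∈ dpar Vs V0 V1 ε := by
  rw [dpar, Submodule.mem_dualAnnihilator]
  intro v hv
  rw [LinearMap.comp_apply, h.π_zero ε v hv, map_zero]

end Splitting

/-- The creators of parity `ε`: the homogeneous part of `ker p ⊕ D*`, where `D*` is identified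
with the functionals `φ` such that `φ ∘ p = φ`. -/
def creators (V0 V1 : Submodule ℂ Vs) (p : Module.End ℂ Vs) (ε : ZMod 2) :
    Submodule ℂ (Vs × Module.Dual ℂ Vs) :=
  homog V0 V1 ε ⊓ (LinearMap.ker p).prod (LinearMap.ker (p.dualMap - LinearMap.id))

/-- The annihilators of parity `ε`: the homogeneous part of `D ⊕ D^⊥`. -/
def annihilators (V0 V1 D : Submodule ℂ Vs) (ε : ZMod 2) :
    Submodule ℂ (Vs × Module.Dual ℂ Vs) :=
  homog V0 V1 ε ⊓ D.prod D.dualAnnihilator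

/-- The supercommutator `[y, u]` of two generators of parity `ε`, as a bilinear form in `(u, y)`.
-/
def fockPairing (ε : ZMod 2) :
    (Vs × Module.Dual ℂ Vs) →ₗ[ℂ] (Vs × Module.Dual ℂ Vs) →ₗ[ℂ] ℂ :=
  LinearMap.mk₂ ℂ (fun u y => superForm (sgn (ε * ε)) y u)
    (fun _ _ _ => by simp [superForm]; ring) (fun _ _ _ => by simp [superForm]; ring)
    (fun _ _ _ => by simp [superForm]; ring) (fun _ _ _ => by simp [superForm]; ring)

theorem dual_p {p : Module.End ℂ Vs} {ε : ZMod 2} {u : Vs × Module.Dual ℂ Vs}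
    (hu : u ∈ creators V0 V1 p ε) (v : Vs) : u.2 (p v) = u.2 v := by
  have := hu.2.2
  have := LinearMap.congr_fun (LinearMap.mem_ker.1 this) v
  simpa [sub_eq_zero] using this

theorem Splitting.fockData {π : ZMod 2 → Module.End ℂ Vs} {p : Module.End ℂ Vs}
    (h : Splitting V0 V1 D π p) :
    FockData (wLin V0 V1) (vacuum V0 V1 D) (creators V0 V1 p) (annihilators V0 V1 D)
      fockPairing where
  rel_yu ε η y hy u hu := by
    rw [wLin_rel hy.1 hu.1]
    congr 2
    split_ifs with heq
    · subst heq; rfl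
    · obtain rfl : ε + 1 = η := zmod2_add_one heq
      have e1 : y.2 u.1 = 0 := (Submodule.mem_dualAnnihilator _).1 hy.1.2 _ hu.1.1
      have e2 : u.2 y.1 = 0 := by
        refine (Submodule.mem_dualAnnihilator _).1 hu.1.2 _ ?_
        rw [zmod2_add_one_add_one]
        exact hy.1.1
      simp [superForm, e1, e2]
  rel_uu ε η u hu u' hu' := by
    rw [wLin_rel hu.1 hu'.1]
    have e1 : u.2 u'.1 = 0 := by rw [← dual_p hu, show p u'.1 = 0 from hu'.2.1, map_zero]
    have e2 : u'.2 u.1 = 0 := by rw [← dual_p hu', show p u.1 = 0 from hu.2.1, map_zero]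
    simp [superForm, e1, e2]
  decomp x := by
    have hU : ∀ ε, (π ε x.1 - p (π ε x.1), (x.2 ∘ₗ p) ∘ₗ π ε) ∈ creators V0 V1 p ε := by
      intro ε
      refine ⟨⟨sub_mem (h.π_mem _ _) (h.p_par _ _ (h.π_mem _ _)), h.dual_mem _⟩, ?_, ?_⟩
      · change p _ = 0
        rw [map_sub, h.p_id _ (h.p_mem _), sub_self]
      · refine LinearMap.mem_ker.2 (LinearMap.ext fun v => ?_)
        change x.2 (p (π ε (p v))) - x.2 (p (π ε v)) = 0
        rw [← h.p_comm, h.p_id _ (h.p_mem _), sub_self]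
    have hY : ∀ ε, (p (π ε x.1), (x.2 - x.2 ∘ₗ p) ∘ₗ π ε) ∈ annihilators V0 V1 D ε := by
      intro ε
      refine ⟨⟨h.p_par _ _ (h.π_mem _ _), h.dual_mem _⟩, h.p_mem _, ?_⟩
      refine (Submodule.mem_dualAnnihilator _).2 fun v hv => ?_
      change x.2 (π ε v) - x.2 (p (π ε v)) = 0
      rw [h.p_id _ (h.π_D _ _ hv), sub_self]
    have hx : x = ((π 0 x.1 - p (π 0 x.1), (x.2 ∘ₗ p) ∘ₗ π 0) +
        (π 1 x.1 - p (π 1 x.1), (x.2 ∘ₗ p) ∘ₗ π 1)) +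
        ((p (π 0 x.1), (x.2 - x.2 ∘ₗ p) ∘ₗ π 0) + (p (π 1 x.1), (x.2 - x.2 ∘ₗ p) ∘ₗ π 1)) := by
      refine Prod.ext ?_ (LinearMap.ext fun v => ?_)
      · conv_lhs => rw [← h.π_add x.1]
        simp only [Prod.fst_add]
        abel
      · conv_lhs => rw [← h.π_add v, map_add]
        simp only [Prod.snd_add, LinearMap.add_apply, LinearMap.comp_apply, LinearMap.sub_apply]
        abel
    rw [hx]
    exact add_mem (Submodule.mem_sup_left (add_mem (Submodule.mem_sup_left (hU 0))
      (Submodule.mem_sup_right (hU 1)))) (Submodule.mem_sup_right (add_mem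
        (Submodule.mem_sup_left (hY 0)) (Submodule.mem_sup_right (hY 1))))
  ann ε y hy := ann_vacuum hy.2
  gen S h1 hS := fock_gen S h1 hS
  nondeg ε u hu hz := by
    have hs : sgn (ε * ε) ≠ 0 := by unfold sgn; split_ifs <;> norm_num
    refine Prod.ext ?_ (LinearMap.ext fun v => ?_)
    · refine (Module.forall_dual_apply_eq_zero_iff ℂ u.1).1 fun f => ?_
      have := hz (0, (f - f ∘ₗ p) ∘ₗ π ε) ⟨⟨zero_mem _, h.dual_mem _⟩, zero_mem _, ?_⟩
      · change ((f - f ∘ₗ p) ∘ₗ π ε) u.1 - sgn (ε * ε) * u.2 0 = 0 at this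
        simpa [h.π_id ε _ hu.1.1, show p u.1 = 0 from hu.2.1] using this
      · refine (Submodule.mem_dualAnnihilator _).2 fun v hv => ?_
        change f (π ε v) - f (p (π ε v)) = 0
        rw [h.p_id _ (h.π_D _ _ hv), sub_self]
    · have := hz (p (π ε v), 0) ⟨⟨h.p_par _ _ (h.π_mem _ _), zero_mem _⟩, h.p_mem _, zero_mem _⟩
      change (0 : Module.Dual ℂ Vs) u.1 - sgn (ε * ε) * u.2 (p (π ε v)) = 0 at this
      rw [dual_p hu, h.dual_π hu.1.2] at this
      simpa [hs] using this

end concrete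

/-! ### The boson-fermion model and nonvanishing of the vacuum -/

section model

open TensorProduct

variable {X : Type*} [AddCommGroup X] [Module ℂ X]

/-- The symmetric algebra of `X`, realised as polynomials in the members of a chosen basis of `X`.
-/
abbrev PolyAlg (X : Type*) [AddCommGroup X] [Module ℂ X] : Type _ :=
  MvPolynomial (Module.Basis.ofVectorSpaceIndex ℂ X) ℂ

/-- The inclusion of `X` into its symmetric algebra. -/
def polyVar : X →ₗ[ℂ] PolyAlg X :=
  (Module.Basis.ofVectorSpace ℂ X).constr ℂ MvPolynomial.X

/-- The derivation of the symmetric algebra that extends the functional `f`. -/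
def polyDer (f : Module.Dual ℂ X) : Derivation ℂ (PolyAlg X) (PolyAlg X) :=
  MvPolynomial.mkDerivation ℂ fun i => MvPolynomial.C (f (Module.Basis.ofVectorSpace ℂ X i))

theorem polyDer_polyVar (f : Module.Dual ℂ X) (a : X) :
    polyDer f (polyVar a) = algebraMap ℂ _ (f a) := by
  have : (polyDer f).toLinearMap ∘ₗ polyVar = Algebra.linearMap ℂ (PolyAlg X) ∘ₗ f := by
    refine (Module.Basis.ofVectorSpace ℂ X).ext fun i => ?_
    simp only [LinearMap.comp_apply, polyVar, Module.Basis.constr_basis, Algebra.linearMap_apply]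
    change polyDer f (MvPolynomial.X i) = _
    rw [polyDer, MvPolynomial.mkDerivation_X]
    rfl
  exact LinearMap.congr_fun this a

theorem polyDer_comm (f g : Module.Dual ℂ X) (x : PolyAlg X) :
    polyDer f (polyDer g x) = polyDer g (polyDer f x) := by
  have : ⁅polyDer f, polyDer g⁆ = 0 := by
    refine MvPolynomial.derivation_ext fun i => ?_
    rw [Derivation.commutator_apply]
    simp [polyDer, MvPolynomial.mkDerivation_X]
  have := congrArg (fun d => d x) this
  rw [Derivation.commutator_apply] at this
  simpa [sub_eq_zero] using this

/-- The bosonic operator of `(a, f)` on the symmetric algebra: multiplication by `a` plus the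
derivation along `f`. -/
def bosonOp : X × Module.Dual ℂ X →ₗ[ℂ] Module.End ℂ (PolyAlg X) where
  toFun z := LinearMap.mulLeft ℂ (polyVar z.1) + (polyDer z.2).toLinearMap
  map_add' z z' := by
    have : polyDer (z.2 + z'.2) = polyDer z.2 + polyDer z'.2 :=
      MvPolynomial.derivation_ext fun i => by simp [polyDer, MvPolynomial.mkDerivation_X]
    refine LinearMap.ext fun x => ?_
    simp [this, add_mul]; ring
  map_smul' c z := by
    have : polyDer (c • z.2) = c • polyDer z.2 :=
      MvPolynomial.derivation_ext fun i => by
        simp [polyDer, MvPolynomial.mkDerivation_X, MvPolynomial.smul_eq_C_mul]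
    refine LinearMap.ext fun x => ?_
    simp [this]

theorem bosonOp_apply (z : X × Module.Dual ℂ X) (x : PolyAlg X) :
    bosonOp z x = polyVar z.1 * x + polyDer z.2 x := rfl

theorem bosonOp_rel (z z' : X × Module.Dual ℂ X) :
    bosonOp z * bosonOp z' = bosonOp z' * bosonOp z +
      algebraMap ℂ _ (z.2 z'.1 - z'.2 z.1) := by
  refine LinearMap.ext fun x => ?_
  simp only [Module.End.mul_apply, LinearMap.add_apply, bosonOp_apply, map_add,
    Derivation.leibniz, polyDer_polyVar, polyDer_comm z.2 z'.2, Module.algebraMap_end_apply,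
    smul_eq_mul]
  rw [Algebra.smul_def, map_sub]
  ring

/-- The fermionic operator of `(a, f)` on the exterior algebra: multiplication by `a` plus the
contraction with `f`. -/
def fermionOp : X × Module.Dual ℂ X →ₗ[ℂ] Module.End ℂ (ExteriorAlgebra ℂ X) :=
  LinearMap.coprod (LinearMap.mul ℂ (ExteriorAlgebra ℂ X) ∘ₗ ExteriorAlgebra.ι ℂ)
    CliffordAlgebra.contractLeft

theorem fermionOp_apply (z : X × Module.Dual ℂ X) (x : ExteriorAlgebra ℂ X) :
    fermionOp z x = ExteriorAlgebra.ι ℂ z.1 * x + CliffordAlgebra.contractLeft z.2 x := rfl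

theorem fermionOp_rel (z z' : X × Module.Dual ℂ X) :
    fermionOp z * fermionOp z' = - (fermionOp z' * fermionOp z) +
      algebraMap ℂ _ (z.2 z'.1 + z'.2 z.1) := by
  refine LinearMap.ext fun x => ?_
  have hc : ∀ (d : Module.Dual ℂ X) (a : X) (b : ExteriorAlgebra ℂ X),
      CliffordAlgebra.contractLeft d (ExteriorAlgebra.ι ℂ a * b) =
        d a • b - ExteriorAlgebra.ι ℂ a * CliffordAlgebra.contractLeft d b :=
    fun d a b => CliffordAlgebra.contractLeft_ι_mul d a b
  have hι : ExteriorAlgebra.ι ℂ z.1 * (ExteriorAlgebra.ι ℂ z'.1 * x) =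
      - (ExteriorAlgebra.ι ℂ z'.1 * (ExteriorAlgebra.ι ℂ z.1 * x)) := by
    rw [← mul_assoc, ← mul_assoc, ← neg_mul]
    congr 1
    exact eq_neg_of_add_eq_zero_left (ExteriorAlgebra.ι_add_mul_swap z.1 z'.1)
  have hd : CliffordAlgebra.contractLeft z.2 (CliffordAlgebra.contractLeft z'.2 x) =
      - CliffordAlgebra.contractLeft z'.2 (CliffordAlgebra.contractLeft z.2 x) :=
    CliffordAlgebra.contractLeft_comm z.2 z'.2 x
  simp only [Module.End.mul_apply, LinearMap.add_apply, LinearMap.neg_apply, fermionOp_apply,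
    map_add, hc, hι, hd, Module.algebraMap_end_apply]
  abel

/-- The space `S(X) ⊗ Λ(X)`, on which even elements act on `S(X)` and odd ones on `Λ(X)`. -/
abbrev FockModel (X : Type*) [AddCommGroup X] [Module ℂ X] : Type _ :=
  PolyAlg X ⊗[ℂ] ExteriorAlgebra ℂ X

/-- The bosonic operators on `S(X) ⊗ Λ(X)`. -/
def bosonExt : X × Module.Dual ℂ X →ₗ[ℂ] Module.End ℂ (FockModel X) :=
  LinearMap.rTensorHom (ExteriorAlgebra ℂ X) ∘ₗ bosonOp

/-- The fermionic operators on `S(X) ⊗ Λ(X)`. No sign is inserted, so they commute with the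
bosonic ones. -/
def fermionExt : X × Module.Dual ℂ X →ₗ[ℂ] Module.End ℂ (FockModel X) :=
  LinearMap.lTensorHom (PolyAlg X) ∘ₗ fermionOp

theorem bosonExt_rel (z z' : X × Module.Dual ℂ X) :
    bosonExt z * bosonExt z' = bosonExt z' * bosonExt z +
      algebraMap ℂ _ (z.2 z'.1 - z'.2 z.1) := by
  change LinearMap.rTensor _ (bosonOp z) * LinearMap.rTensor _ (bosonOp z') =
    LinearMap.rTensor _ (bosonOp z') * LinearMap.rTensor _ (bosonOp z) + _
  rw [← LinearMap.rTensor_mul, bosonOp_rel, LinearMap.rTensor_add, LinearMap.rTensor_mul,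
    Algebra.algebraMap_eq_smul_one, LinearMap.rTensor_smul, Module.End.one_eq_id,
    LinearMap.rTensor_id]
  rfl

theorem fermionExt_rel (z z' : X × Module.Dual ℂ X) :
    fermionExt z * fermionExt z' = - (fermionExt z' * fermionExt z) +
      algebraMap ℂ _ (z.2 z'.1 + z'.2 z.1) := by
  change LinearMap.lTensor _ (fermionOp z) * LinearMap.lTensor _ (fermionOp z') =
    - (LinearMap.lTensor _ (fermionOp z') * LinearMap.lTensor _ (fermionOp z)) + _
  rw [← LinearMap.lTensor_mul, fermionOp_rel, LinearMap.lTensor_add, LinearMap.lTensor_neg,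
    LinearMap.lTensor_mul, Algebra.algebraMap_eq_smul_one, LinearMap.lTensor_smul,
    Module.End.one_eq_id, LinearMap.lTensor_id]
  rfl

theorem bosonExt_fermionExt (z z' : X × Module.Dual ℂ X) :
    bosonExt z * fermionExt z' = fermionExt z' * bosonExt z := by
  change LinearMap.rTensor _ (bosonOp z) ∘ₗ LinearMap.lTensor _ (fermionOp z') =
    LinearMap.lTensor _ (fermionOp z') ∘ₗ LinearMap.rTensor _ (bosonOp z)
  rw [LinearMap.rTensor_comp_lTensor, LinearMap.lTensor_comp_rTensor]

/-- The vector `1 ⊗ 1`. -/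
def modelVac : FockModel X := 1 ⊗ₜ 1

theorem modelVac_ne_zero : (modelVac : FockModel X) ≠ 0 := by
  intro h
  have := congrArg ((TensorProduct.lid ℂ ℂ).toLinearMap ∘ₗ TensorProduct.map
    (MvPolynomial.aeval (fun _ => (0 : ℂ))).toLinearMap
    (ExteriorAlgebra.algebraMapInv (R := ℂ) (M := X)).toLinearMap) h
  simp [modelVac] at this

theorem bosonExt_vac (f : Module.Dual ℂ X) : bosonExt (0, f) modelVac = 0 := by
  change bosonOp (0, f) 1 ⊗ₜ[ℂ] (1 : ExteriorAlgebra ℂ X) = 0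
  rw [bosonOp_apply]; simp

theorem fermionExt_vac (f : Module.Dual ℂ X) : fermionExt (0, f) modelVac = 0 := by
  change (1 : PolyAlg X) ⊗ₜ[ℂ] fermionOp (0, f) 1 = 0
  have : CliffordAlgebra.contractLeft f (1 : ExteriorAlgebra ℂ X) = 0 :=
    CliffordAlgebra.contractLeft_one _ f
  rw [fermionOp_apply]
  dsimp only
  rw [this]; simp

end model

section nontrivial

variable {Vs} {V0 V1 D : Submodule ℂ Vs}

/-- The contribution of parity `ε` of `x = (v, φ)` to the operators of the model over
`X = V ⊕ V*`. The component in `X` is the creator part of `x`, that is `v` modulo `D` and `φ`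
restricted to `D`; the functional on `X` is the supercommutator with creators, so that it only
involves the annihilator part of `x`. -/
def modelArg (π : ZMod 2 → Module.End ℂ Vs) (p : Module.End ℂ Vs) (ε : ZMod 2) :
    (Vs × Module.Dual ℂ Vs) →ₗ[ℂ]
      (Vs × Module.Dual ℂ Vs) × Module.Dual ℂ (Vs × Module.Dual ℂ Vs) :=
  LinearMap.prod
    (LinearMap.prodMap (π ε - p ∘ₗ π ε) (p ∘ₗ π ε).dualMap)
    (LinearMap.mk₂ ℂ
      (fun x z => x.2 (π ε z.1 - p (π ε z.1)) - sgn ε * z.2 (p (π ε x.1)))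
      (fun _ _ _ => by simp; ring) (fun _ _ _ => by simp; ring)
      (fun _ _ _ => by simp; ring) (fun _ _ _ => by simp; ring))

variable {π : ZMod 2 → Module.End ℂ Vs} {p : Module.End ℂ Vs}

theorem modelArg_fst (ε : ZMod 2) (x : Vs × Module.Dual ℂ Vs) :
    (modelArg π p ε x).1 = (π ε x.1 - p (π ε x.1), x.2 ∘ₗ (p ∘ₗ π ε)) := rfl

theorem modelArg_snd (ε : ZMod 2) (x z : Vs × Module.Dual ℂ Vs) :
    (modelArg π p ε x).2 z =
      x.2 (π ε z.1 - p (π ε z.1)) - sgn ε * z.2 (p (π ε x.1)) := rfl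

theorem Splitting.modelArg_eq_zero (h : Splitting V0 V1 D π p) {ε : ZMod 2}
    {x : Vs × Module.Dual ℂ Vs} (hx : x ∈ homog V0 V1 (ε + 1)) : modelArg π p ε x = 0 := by
  have h1 : π ε x.1 = 0 := h.π_zero ε _ hx.1
  have h2 : ∀ v, x.2 (π ε v) = 0 := fun v =>
    (Submodule.mem_dualAnnihilator _).1 hx.2 _ (by rw [zmod2_add_one_add_one]; exact h.π_mem ε v)
  refine Prod.ext (Prod.ext ?_ (LinearMap.ext fun v => ?_)) (LinearMap.ext fun z => ?_)
  · simp [modelArg_fst, h1]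
  · simp [modelArg_fst, h.p_comm, h2]
  · simp [modelArg_snd, h1, h2, h.p_comm]

/-- The operators of the model have the scalar supercommutators prescribed by the relations of
`W_V`. -/
theorem Splitting.modelArg_form (h : Splitting V0 V1 D π p) {ε : ZMod 2}
    {x y : Vs × Module.Dual ℂ Vs} (hx : x ∈ homog V0 V1 ε) (hy : y ∈ homog V0 V1 ε) :
    (modelArg π p ε x).2 (modelArg π p ε y).1 -
      sgn ε * (modelArg π p ε y).2 (modelArg π p ε x).1 = superForm (sgn ε) x y := by
  have hx1 := h.π_id ε _ hx.1
  have hy1 := h.π_id ε _ hy.1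
  have hpx : p (p x.1) = p x.1 := h.p_id _ (h.p_mem _)
  have hpy : p (p y.1) = p y.1 := h.p_id _ (h.p_mem _)
  simp only [modelArg_snd, modelArg_fst, superForm, LinearMap.comp_apply, map_sub, hx1, hy1,
    ← h.p_comm, hpx, hpy]
  linear_combination (x.2 (p y.1)) * sgn_mul_self ε

/-- Elements of `D ⊕ D^⊥` have no creator part. -/
theorem Splitting.modelArg_ann (h : Splitting V0 V1 D π p) (ε : ZMod 2)
    {y : Vs × Module.Dual ℂ Vs} (hy : y ∈ D.prod D.dualAnnihilator) :
    (modelArg π p ε y).1 = 0 := by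
  refine Prod.ext ?_ (LinearMap.ext fun v => ?_)
  · simp [modelArg_fst, h.p_id _ (h.π_D ε _ hy.1)]
  · exact (Submodule.mem_dualAnnihilator _).1 hy.2 _ (h.p_mem _)

/-- The operators of the model by which the generators `V ⊕ V*` of `W_V` act. -/
def modelRep (π : ZMod 2 → Module.End ℂ Vs) (p : Module.End ℂ Vs) :
    (Vs × Module.Dual ℂ Vs) →ₗ[ℂ] Module.End ℂ (FockModel (Vs × Module.Dual ℂ Vs)) :=
  bosonExt ∘ₗ modelArg π p 0 + fermionExt ∘ₗ modelArg π p 1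

theorem Splitting.modelRep_rel (h : Splitting V0 V1 D π p) (ε η : ZMod 2)
    (x : Vs × Module.Dual ℂ Vs) (hx : x ∈ homog V0 V1 ε)
    (y : Vs × Module.Dual ℂ Vs) (hy : y ∈ homog V0 V1 η) :
    modelRep π p x * modelRep π p y = sgn (ε * η) • (modelRep π p y * modelRep π p x) +
      algebraMap ℂ _ (superForm (sgn (ε * η)) x y) := by
  have ev : ∀ x ∈ homog V0 V1 0, modelRep π p x = bosonExt (modelArg π p 0 x) := by
    intro x hx
    simp [modelRep, h.modelArg_eq_zero (ε := 1) (x := x) hx]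
  have od : ∀ x ∈ homog V0 V1 1, modelRep π p x = fermionExt (modelArg π p 1 x) := by
    intro x hx
    simp [modelRep, h.modelArg_eq_zero (ε := 0) (x := x) hx]
  have s0 : sgn 0 = 1 := rfl
  have s1 : sgn 1 = -1 := rfl
  -- elements of opposite parity pair to zero
  have mixed : ∀ x ∈ homog V0 V1 0, ∀ y ∈ homog V0 V1 1, x.2 y.1 = 0 ∧ y.2 x.1 = 0 :=
    fun x hx y hy => ⟨(Submodule.mem_dualAnnihilator _).1 hx.2 _ hy.1,
      (Submodule.mem_dualAnnihilator _).1 hy.2 _ hx.1⟩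
  rcases zmod2_cases ε with rfl | rfl <;> rcases zmod2_cases η with rfl | rfl
  · rw [ev x hx, ev y hy, bosonExt_rel, mul_zero, ← h.modelArg_form hx hy, s0, one_smul, one_mul]
  · rw [ev x hx, od y hy, zero_mul, s0, one_smul, bosonExt_fermionExt, superForm,
      (mixed x hx y hy).1, (mixed x hx y hy).2]
    simp
  · rw [od x hx, ev y hy, mul_zero, s0, one_smul, bosonExt_fermionExt, superForm,
      (mixed y hy x hx).1, (mixed y hy x hx).2]
    simp
  · rw [od x hx, od y hy, fermionExt_rel, mul_one, ← h.modelArg_form hx hy, s1, neg_one_mul,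
      sub_neg_eq_add]
    exact congrArg (· + _) (LinearMap.ext fun t => by
      rw [LinearMap.neg_apply, LinearMap.smul_apply, neg_smul, one_smul])

/-- The map `a ↦ a (1 ⊗ 1)` from `W_V` to the model kills the left ideal `J(D)` but not `1`. -/
theorem Splitting.vacuum_ne_zero (h : Splitting V0 V1 D π p) : vacuum V0 V1 D ≠ 0 := by
  obtain ⟨ρ, hρ⟩ := exists_lift (V0 := V0) (V1 := V1)
    (A := Module.End ℂ (FockModel (Vs × Module.Dual ℂ Vs))) (modelRep π p)
    (fun ε η x hx y hy => h.modelRep_rel ε η x hx y hy)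
  have hkill : ∀ y ∈ D.prod D.dualAnnihilator, modelRep π p y modelVac = 0 := by
    intro y hy
    have e : ∀ ε, modelArg π p ε y = (0, (modelArg π p ε y).2) := fun ε =>
      Prod.ext (h.modelArg_ann ε hy) rfl
    change bosonExt (modelArg π p 0 y) modelVac + fermionExt (modelArg π p 1 y) modelVac = 0
    rw [e 0, e 1, bosonExt_vac, fermionExt_vac, add_zero]
  have hJ : ∀ a ∈ idealJ Vs V0 V1 D, ρ a modelVac = 0 := by
    intro a ha
    induction ha using Submodule.span_induction with
    | zero => simp
    | add x y _ _ hx hy => rw [map_add, LinearMap.add_apply, hx, hy, add_zero]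
    | smul a x _ hx => rw [smul_eq_mul, map_mul, Module.End.mul_apply, hx, map_zero]
    | mem x hx =>
      rcases hx with ⟨v, hv, rfl⟩ | ⟨φ, hφ, rfl⟩
      · change ρ (wLin V0 V1 (v, 0)) modelVac = 0
        rw [hρ]; exact hkill _ ⟨hv, zero_mem _⟩
      · change ρ (wLin V0 V1 (0, φ)) modelVac = 0
        rw [hρ]; exact hkill _ ⟨zero_mem _, hφ⟩
  intro h0
  rw [vacuum, Submodule.mkQ_apply, Submodule.Quotient.mk_eq_zero] at h0
  have := hJ 1 h0
  rw [map_one, Module.End.one_apply] at this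
  exact modelVac_ne_zero this

end nontrivial

/-! ### Gradings as eigenspaces of automorphisms -/

section gradings

theorem eigen_shift {W F : Type*} [Ring W] [Algebra ℂ W] [AddCommGroup F] [Module ℂ F]
    [Module W F] [IsScalarTower ℂ W F] {σ : Module.End ℂ F} {a b : W} {c μ : ℂ} {x : F}
    (hσ : σ (a • x) = b • σ x) (hb : b = c • a) (hx : x ∈ σ.eigenspace μ) :
    a • x ∈ σ.eigenspace (μ * c) := by
  rw [Module.End.mem_eigenspace_iff] at hx ⊢
  rw [hσ, hx, hb, smul_comm_scalar, smul_assoc, smul_smul]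

variable {Vs} {V0 V1 D : Submodule ℂ Vs}

/-- Even maps `g` of `V` and `k` of `V*` that are compatible with the evaluation pairing, `D` and
`D^⊥` extend to an endomorphism of `W_V` that descends to `F_V(D)`. -/
theorem exists_fock_automorphism (g : Module.End ℂ Vs) (k : Module.End ℂ (Module.Dual ℂ Vs))
    (hg : ∀ ε, ∀ v ∈ par Vs V0 V1 ε, g v ∈ par Vs V0 V1 ε)
    (hk : ∀ ε, ∀ φ ∈ dpar Vs V0 V1 ε, k φ ∈ dpar Vs V0 V1 ε)
    (hgk : ∀ φ v, k φ (g v) = φ v) (hgD : ∀ v ∈ D, g v ∈ D)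
    (hkD : ∀ φ ∈ D.dualAnnihilator, k φ ∈ D.dualAnnihilator) :
    ∃ σ : Module.End ℂ (FockSup Vs V0 V1 D), σ (vacuum V0 V1 D) = vacuum V0 V1 D ∧
      (∀ v m, σ (wV Vs V0 V1 v • m) = wV Vs V0 V1 (g v) • σ m) ∧
      (∀ φ m, σ (wF Vs V0 V1 φ • m) = wF Vs V0 V1 (k φ) • σ m) := by
  obtain ⟨ρ, hρ⟩ := exists_lift (V0 := V0) (V1 := V1) (wLin V0 V1 ∘ₗ g.prodMap k) (by
    intro ε η x hx y hy
    have hx' : g.prodMap k x ∈ homog V0 V1 ε := ⟨hg ε _ hx.1, hk ε _ hx.2⟩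
    have hy' : g.prodMap k y ∈ homog V0 V1 η := ⟨hg η _ hy.1, hk η _ hy.2⟩
    have := wLin_rel hx' hy'
    rw [show superForm (sgn (ε * η)) (g.prodMap k x) (g.prodMap k y) =
      superForm (sgn (ε * η)) x y by simp [superForm, hgk]] at this
    exact this)
  have hV : ∀ v, ρ (wV Vs V0 V1 v) = wV Vs V0 V1 (g v) := fun v => by
    have := hρ (v, 0)
    change ρ (wV Vs V0 V1 v) = wLin V0 V1 (g v, k 0) at this
    rwa [map_zero] at this
  have hF : ∀ φ, ρ (wF Vs V0 V1 φ) = wF Vs V0 V1 (k φ) := fun φ => by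
    have := hρ (0, φ)
    change ρ (wF Vs V0 V1 φ) = wLin V0 V1 (g 0, k φ) at this
    rwa [map_zero] at this
  let ρs : WeylSup Vs V0 V1 →ₛₗ[(ρ : WeylSup Vs V0 V1 →+* WeylSup Vs V0 V1)] WeylSup Vs V0 V1 :=
    { toFun := ρ, map_add' := map_add ρ, map_smul' := fun a b => map_mul ρ a b }
  have hJ : idealJ Vs V0 V1 D ≤ (idealJ Vs V0 V1 D).comap ρs := by
    refine Submodule.span_le.2 ?_
    rintro _ (⟨v, hv, rfl⟩ | ⟨φ, hφ, rfl⟩)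
    · change ρ _ ∈ idealJ Vs V0 V1 D
      rw [hV]; exact Submodule.subset_span (Or.inl ⟨_, hgD v hv, rfl⟩)
    · change ρ _ ∈ idealJ Vs V0 V1 D
      rw [hF]; exact Submodule.subset_span (Or.inr ⟨_, hkD φ hφ, rfl⟩)
  let τ := Submodule.mapQ _ _ ρs hJ
  have hτ : ∀ a m, τ (a • m) = ρ a • τ m := fun a m => τ.map_smulₛₗ a m
  refine ⟨{ toFun := τ, map_add' := map_add τ, map_smul' := fun c m => ?_ }, ?_, ?_, ?_⟩
  · rw [← algebraMap_smul (WeylSup Vs V0 V1) c m, hτ, AlgHom.commutes, algebraMap_smul]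
    rfl
  · change τ (Submodule.Quotient.mk 1) = Submodule.Quotient.mk 1
    rw [Submodule.mapQ_apply]
    exact congrArg _ (map_one ρ)
  · intro v m; rw [← hV]; exact hτ _ m
  · intro φ m; rw [← hF]; exact hτ _ m

theorem wV_smul (c : ℂ) (v : Vs) : wV Vs V0 V1 (c • v) = c • wV Vs V0 V1 v := by
  change wLin V0 V1 (c • v, 0) = c • wLin V0 V1 (v, 0)
  rw [← map_smul]; simp

theorem wF_smul (c : ℂ) (φ : Module.Dual ℂ Vs) : wF Vs V0 V1 (c • φ) = c • wF Vs V0 V1 φ := by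
  change wLin V0 V1 (0, c • φ) = c • wLin V0 V1 (0, φ)
  rw [← map_smul]; simp

/-- The component of degree `z` is the eigenspace with eigenvalue `2 ^ z` of the automorphism
induced by `v ↦ 2 v` and `φ ↦ φ / 2`. -/
theorem exists_int_grading : ∃ G : ℤ → Submodule ℂ (FockSup Vs V0 V1 D),
    DirectSum.IsInternal G ∧ vacuum V0 V1 D ∈ G 0 ∧
      (∀ (z : ℤ) (v : Vs), ∀ x ∈ G z, wV Vs V0 V1 v • x ∈ G (z + 1)) ∧
      (∀ (z : ℤ) (φ : Module.Dual ℂ Vs), ∀ x ∈ G z, wF Vs V0 V1 φ • x ∈ G (z - 1)) := by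
  obtain ⟨σ, h1, hV, hF⟩ := exists_fock_automorphism (V0 := V0) (V1 := V1) (D := D)
    ((2 : ℂ) • 1) ((2 : ℂ)⁻¹ • 1)
    (fun ε v hv => Submodule.smul_mem _ _ hv) (fun ε φ hφ => Submodule.smul_mem _ _ hφ)
    (fun φ v => by simp) (fun v hv => Submodule.smul_mem _ _ hv)
    (fun φ hφ => Submodule.smul_mem _ _ hφ)
  have hV' : ∀ (z : ℤ) (v : Vs), ∀ x ∈ σ.eigenspace ((2 : ℂ) ^ z),
      wV Vs V0 V1 v • x ∈ σ.eigenspace ((2 : ℂ) ^ (z + 1)) := by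
    intro z v x hx
    rw [zpow_add_one₀ two_ne_zero]
    exact eigen_shift (W := WeylSup Vs V0 V1) (F := FockSup Vs V0 V1 D)
      (a := wV Vs V0 V1 v) (c := 2) (hV v x) (wV_smul _ v) hx
  have hF' : ∀ (z : ℤ) (φ : Module.Dual ℂ Vs), ∀ x ∈ σ.eigenspace ((2 : ℂ) ^ z),
      wF Vs V0 V1 φ • x ∈ σ.eigenspace ((2 : ℂ) ^ (z - 1)) := by
    intro z φ x hx
    rw [zpow_sub_one₀ two_ne_zero]
    exact eigen_shift (W := WeylSup Vs V0 V1) (F := FockSup Vs V0 V1 D)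
      (a := wF Vs V0 V1 φ) (c := 2⁻¹) (hF φ x) (wF_smul _ φ) hx
  have h0 : vacuum V0 V1 D ∈ σ.eigenspace ((2 : ℂ) ^ (0 : ℤ)) := by
    rw [Module.End.mem_eigenspace_iff, h1, zpow_zero, one_smul]
  have hinj : Function.Injective fun z : ℤ => (2 : ℂ) ^ z := by
    intro a b hab
    have : ((2 : ℝ) ^ a) = (2 : ℝ) ^ b := by
      have h := congrArg (fun c : ℂ => ‖c‖) hab
      simpa [norm_zpow] using h
    exact zpow_right_injective₀ (by norm_num) (by norm_num) this
  refine ⟨fun z => σ.eigenspace ((2 : ℂ) ^ z), ?_, h0, hV', hF'⟩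
  refine DirectSum.isInternal_submodule_of_iSupIndep_of_iSup_eq_top
    ((Module.End.eigenspaces_iSupIndep σ).comp hinj)
    (fock_gen _ (Submodule.mem_iSup_of_mem 0 h0) fun x s hs => ?_)
  induction hs using Submodule.iSup_induction' with
  | zero => rw [smul_zero]; exact zero_mem _
  | add a b _ _ ha hb => rw [smul_add]; exact add_mem ha hb
  | mem z m hm =>
    rw [wLin_eq, add_smul]
    exact add_mem (Submodule.mem_iSup_of_mem (z + 1) (hV' z _ m hm))
      (Submodule.mem_iSup_of_mem (z - 1) (hF' z _ m hm))

theorem Splitting.homog_decomp {π : ZMod 2 → Module.End ℂ Vs} {p : Module.End ℂ Vs}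
    (h : Splitting V0 V1 D π p) (x : Vs × Module.Dual ℂ Vs) :
    ∃ x₀ ∈ homog V0 V1 0, ∃ x₁ ∈ homog V0 V1 1, x = x₀ + x₁ := by
  refine ⟨(π 0 x.1, x.2 ∘ₗ π 0), ⟨h.π_mem 0 _, h.dual_mem _⟩, (π 1 x.1, x.2 ∘ₗ π 1),
    ⟨h.π_mem 1 _, h.dual_mem _⟩, Prod.ext (h.π_add _).symm (LinearMap.ext fun v => ?_)⟩
  conv_lhs => rw [← h.π_add v, map_add]
  rfl

/-- The component of parity `ε` is the eigenspace with eigenvalue `(-1)^ε` of the automorphism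
induced by the parity involution of `V`. -/
theorem Splitting.exists_parity_grading {π : ZMod 2 → Module.End ℂ Vs} {p : Module.End ℂ Vs}
    (h : Splitting V0 V1 D π p) : ∃ P : ZMod 2 → Submodule ℂ (FockSup Vs V0 V1 D),
    DirectSum.IsInternal P ∧ vacuum V0 V1 D ∈ P 0 ∧
      (∀ (ε μ : ZMod 2) (v : Vs), v ∈ par Vs V0 V1 ε →
        ∀ x ∈ P μ, wV Vs V0 V1 v • x ∈ P (μ + ε)) ∧
      (∀ (ε μ : ZMod 2) (φ : Module.Dual ℂ Vs), φ ∈ dpar Vs V0 V1 ε →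
        ∀ x ∈ P μ, wF Vs V0 V1 φ • x ∈ P (μ + ε)) := by
  -- the parity involution of `V`
  let g : Module.End ℂ Vs := π 0 - π 1
  have hgp : ∀ ε, ∀ v ∈ par Vs V0 V1 ε, g v = sgn ε • v := by
    intro ε v hv
    rcases zmod2_cases ε with rfl | rfl
    · simp [g, sgn, h.π_id 0 v hv, h.π_zero 1 v hv]
    · simp [g, sgn, h.π_id 1 v hv, h.π_zero 0 v hv]
  have hgd : ∀ ε, ∀ φ ∈ dpar Vs V0 V1 ε, g.dualMap φ = sgn ε • φ := by
    intro ε φ hφ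
    refine LinearMap.ext fun v => ?_
    change φ (g v) = sgn ε • φ v
    rw [← h.dual_π hφ v, ← h.dual_π hφ (g v)]
    rcases zmod2_cases ε with rfl | rfl
    · simp [g, sgn, h.π_id 0 _ (h.π_mem 0 v), h.π_zero 0 _ (h.π_mem 1 v)]
    · simp [g, sgn, h.π_id 1 _ (h.π_mem 1 v), h.π_zero 1 _ (h.π_mem 0 v)]
  have hgg : ∀ v, g (g v) = v := by
    intro v
    conv_lhs => rw [← h.π_add v]
    rw [map_add, hgp 0 _ (h.π_mem 0 v), hgp 1 _ (h.π_mem 1 v), map_add, map_smul, map_smul,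
      hgp 0 _ (h.π_mem 0 v), hgp 1 _ (h.π_mem 1 v), smul_smul, smul_smul, sgn_mul_self,
      sgn_mul_self, one_smul, one_smul, h.π_add]
  have hgD : ∀ v ∈ D, g v ∈ D := fun v hv => sub_mem (h.π_D 0 v hv) (h.π_D 1 v hv)
  obtain ⟨σ, h1, hV, hF⟩ := exists_fock_automorphism (V0 := V0) (V1 := V1) (D := D) g g.dualMap
    (fun ε v hv => by rw [hgp ε v hv]; exact Submodule.smul_mem _ _ hv)
    (fun ε φ hφ => by rw [hgd ε φ hφ]; exact Submodule.smul_mem _ _ hφ)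
    (fun φ v => by simp [hgg]) hgD
    (fun φ hφ => (Submodule.mem_dualAnnihilator _).2 fun v hv =>
      (Submodule.mem_dualAnnihilator _).1 hφ _ (hgD v hv))
  have hs : ∀ μ ε, sgn μ * sgn ε = sgn (μ + ε) := by
    intro μ ε
    rcases zmod2_cases ε with rfl | rfl <;> rcases zmod2_cases μ with rfl | rfl <;>
      simp [sgn, show (1 : ZMod 2) + 1 = 0 from rfl]
  have hV' : ∀ (ε μ : ZMod 2) (v : Vs), v ∈ par Vs V0 V1 ε → ∀ x ∈ σ.eigenspace (sgn μ),
      wV Vs V0 V1 v • x ∈ σ.eigenspace (sgn (μ + ε)) := by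
    intro ε μ v hv x hx
    rw [← hs]
    exact eigen_shift (W := WeylSup Vs V0 V1) (F := FockSup Vs V0 V1 D)
      (a := wV Vs V0 V1 v) (c := sgn ε) (hV v x)
      ((hgp ε v hv).symm ▸ wV_smul (sgn ε) v) hx
  have hF' : ∀ (ε μ : ZMod 2) (φ : Module.Dual ℂ Vs), φ ∈ dpar Vs V0 V1 ε →
      ∀ x ∈ σ.eigenspace (sgn μ), wF Vs V0 V1 φ • x ∈ σ.eigenspace (sgn (μ + ε)) := by
    intro ε μ φ hφ x hx
    rw [← hs]
    exact eigen_shift (W := WeylSup Vs V0 V1) (F := FockSup Vs V0 V1 D)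
      (a := wF Vs V0 V1 φ) (c := sgn ε) (hF φ x)
      ((hgd ε φ hφ).symm ▸ wF_smul (sgn ε) φ) hx
  have h0 : vacuum V0 V1 D ∈ σ.eigenspace (sgn 0) := by
    rw [Module.End.mem_eigenspace_iff, h1, show sgn 0 = 1 from rfl, one_smul]
  have hinj : Function.Injective sgn := by
    intro a b hab
    rcases zmod2_cases a with rfl | rfl <;> rcases zmod2_cases b with rfl | rfl
    · rfl
    · norm_num [sgn] at hab
    · norm_num [sgn] at hab
    · rfl
  refine ⟨fun ε => σ.eigenspace (sgn ε), ?_, h0, hV', hF'⟩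
  refine DirectSum.isInternal_submodule_of_iSupIndep_of_iSup_eq_top
    ((Module.End.eigenspaces_iSupIndep σ).comp hinj)
    (fock_gen _ (Submodule.mem_iSup_of_mem 0 h0) fun x s hs => ?_)
  induction hs using Submodule.iSup_induction' with
  | zero => rw [smul_zero]; exact zero_mem _
  | add a b _ _ ha hb => rw [smul_add]; exact add_mem ha hb
  | mem μ m hm =>
    have key : ∀ ε, ∀ y ∈ homog V0 V1 ε,
        wLin V0 V1 y • m ∈ ⨆ ε, σ.eigenspace (sgn ε) := by
      intro ε y hy
      rw [wLin_eq, add_smul]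
      exact add_mem (Submodule.mem_iSup_of_mem (μ + ε) (hV' ε μ _ hy.1 m hm))
        (Submodule.mem_iSup_of_mem (μ + ε) (hF' ε μ _ hy.2 m hm))
    obtain ⟨x₀, hx₀, x₁, hx₁, rfl⟩ := h.homog_decomp x
    rw [map_add, add_smul]
    exact add_mem (key 0 _ hx₀) (key 1 _ hx₁)

end gradings

/-! ### Non-isomorphism -/

section nonisomorphism

variable {Vs} {V0 V1 D : Submodule ℂ Vs} {π : ZMod 2 → Module.End ℂ Vs} {p : Module.End ℂ Vs}

theorem pow_mul_of_comm_scalar {W : Type*} [Ring W] [Algebra ℂ W] {a b : W} {c : ℂ}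
    (hab : a * b = b * a + algebraMap ℂ W c) (n : ℕ) :
    a ^ (n + 1) * b = b * a ^ (n + 1) + ((n + 1 : ℂ) * c) • a ^ n := by
  induction n with
  | zero => simp [hab, Algebra.algebraMap_eq_smul_one]
  | succ n ih =>
    rw [pow_succ' a (n + 1), mul_assoc, ih, mul_add, ← mul_assoc, hab, add_mul, mul_assoc,
      mul_smul_comm, ← pow_succ', ← pow_succ', Algebra.algebraMap_eq_smul_one, smul_mul_assoc,
      one_mul]
    push_cast
    module

theorem mul_pow_of_comm_scalar {W : Type*} [Ring W] [Algebra ℂ W] {a b : W} {c : ℂ}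
    (hab : a * b = b * a + algebraMap ℂ W c) (n : ℕ) :
    a * b ^ (n + 1) = b ^ (n + 1) * a + ((n + 1 : ℂ) * c) • b ^ n := by
  induction n with
  | zero => simp [hab, Algebra.algebraMap_eq_smul_one]
  | succ n ih =>
    rw [pow_succ b (n + 1), ← mul_assoc, ih, add_mul, mul_assoc, hab, mul_add, smul_mul_assoc,
      ← pow_succ, ← mul_assoc, Algebra.algebraMap_eq_smul_one, mul_smul_comm, mul_one]
    push_cast
    module

section generic

variable {W F : Type*} [Ring W] [Algebra ℂ W] [AddCommGroup F] [Module ℂ F]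
  [Module W F] [IsScalarTower ℂ W F]

theorem mem_maxGenEigenspace_lsmul (a : W) (m : F) :
    m ∈ (Algebra.lsmul ℂ ℂ F a).maxGenEigenspace 0 ↔ ∃ n : ℕ, a ^ n • m = 0 := by
  rw [Module.End.mem_maxGenEigenspace]
  simp only [zero_smul, sub_zero, ← map_pow, Algebra.lsmul_coe]

theorem pow_succ_smul_eq_zero {a b : W} {c : ℂ} (hab : a * b = b * a + algebraMap ℂ W c)
    {n : ℕ} {m : F} (hn : a ^ n • m = 0) : a ^ (n + 1) • b • m = 0 := by
  rw [smul_smul, pow_mul_of_comm_scalar hab, add_smul, mul_smul, pow_succ', mul_smul a, hn,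
    smul_assoc, hn, smul_zero, smul_zero, smul_zero, add_zero]

theorem pow_smul_eq_zero_of_succ {a b : W} {c : ℂ} (hab : a * b = b * a + algebraMap ℂ W c)
    (hc : c ≠ 0) {n : ℕ} {m : F} (ha : a • m = 0) (hn : b ^ (n + 1) • m = 0) :
    b ^ n • m = 0 := by
  have h1 : a • b ^ (n + 1) • m = 0 := by rw [hn, smul_zero]
  rw [smul_smul, mul_pow_of_comm_scalar hab, add_smul, mul_smul, ha, smul_zero, zero_add,
    smul_assoc, smul_eq_zero] at h1
  exact h1.resolve_left (mul_ne_zero (Nat.cast_add_one_ne_zero n) hc)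

end generic

/-- Even elements of `D` act locally nilpotently on `F_V(D)`: they kill the vacuum, and their
supercommutators with all generators are scalars. -/
theorem Splitting.locally_nilpotent (h : Splitting V0 V1 D π p) {v : Vs} (hv : v ∈ D)
    (hv0 : v ∈ V0) (m : FockSup Vs V0 V1 D) : ∃ n : ℕ, wV Vs V0 V1 v ^ n • m = 0 := by
  let a := wLin V0 V1 (v, 0)
  let S := (Algebra.lsmul ℂ ℂ (FockSup Vs V0 V1 D) a).maxGenEigenspace 0
  have hS : ∀ m, m ∈ S ↔ ∃ n : ℕ, a ^ n • m = 0 := by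
    exact mem_maxGenEigenspace_lsmul a
  have hvH : (v, (0 : Module.Dual ℂ Vs)) ∈ homog V0 V1 0 := ⟨hv0, zero_mem _⟩
  suffices hT : S = ⊤ from (hS m).1 (hT ▸ Submodule.mem_top)
  refine fock_gen S ((hS _).2 ⟨1, ?_⟩) fun x m hm => ?_
  · rw [pow_one]; exact ann_vacuum ⟨hv, zero_mem _⟩
  · have key : ∀ ε, ∀ y ∈ homog V0 V1 ε, wLin V0 V1 y • m ∈ S := by
      intro ε y hy
      have hrel := wLin_rel hvH hy
      rw [zero_mul, show sgn 0 = 1 from rfl, one_smul] at hrel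
      obtain ⟨n, hn⟩ := (hS m).1 hm
      exact (hS _).2 ⟨n + 1, pow_succ_smul_eq_zero hrel hn⟩
    obtain ⟨x₀, hx₀, x₁, hx₁, rfl⟩ := h.homog_decomp x
    rw [map_add, add_smul]
    exact add_mem (key 0 _ hx₀) (key 1 _ hx₁)

/-- An even element `v` outside `D` acts on the vacuum of `F_V(D)` without nilpotency: there is an
even functional `φ ∈ D^⊥` with `φ(v) ≠ 0`, and `φ v^(n+1) vac = (n+1) φ(v) v^n vac`. -/
theorem Splitting.pow_vacuum_ne_zero (h : Splitting V0 V1 D π p) {v : Vs} (hv : v ∉ D)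
    (hv0 : v ∈ V0) (n : ℕ) : wV Vs V0 V1 v ^ n • vacuum V0 V1 D ≠ 0 := by
  obtain ⟨f, hfv, hf⟩ : ∃ f : Module.Dual ℂ Vs, f v ≠ 0 ∧ ∀ d ∈ D, f d = 0 := by
    obtain ⟨f, hf, hfD⟩ := Submodule.exists_dual_map_eq_bot_of_notMem hv inferInstance
    exact ⟨f, hf, fun d hd => by
      have : f d ∈ D.map f := Submodule.mem_map_of_mem hd
      rwa [hfD, Submodule.mem_bot] at this⟩
  let x : Vs × Module.Dual ℂ Vs := (0, f ∘ₗ π 0)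
  have hxH : x ∈ homog V0 V1 0 := ⟨zero_mem _, h.dual_mem _⟩
  have hxD : x ∈ D.prod D.dualAnnihilator := ⟨zero_mem _,
    (Submodule.mem_dualAnnihilator _).2 fun d hd => hf _ (h.π_D 0 d hd)⟩
  have hvH : (v, (0 : Module.Dual ℂ Vs)) ∈ homog V0 V1 0 := ⟨hv0, zero_mem _⟩
  have hrel := wLin_rel hxH hvH
  rw [zero_mul, show sgn 0 = 1 from rfl, one_smul] at hrel
  have hform : superForm 1 x (v, 0) = f v := by
    simp [superForm, x, h.π_id 0 v hv0]
  induction n with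
  | zero => rw [pow_zero, one_smul]; exact h.vacuum_ne_zero
  | succ n ih =>
    intro h0
    exact ih (pow_smul_eq_zero_of_succ hrel (hform ▸ hfv) (ann_vacuum hxD) h0)

/-- The even part of `D'` is contained in that of `D` as soon as `F_V(D)` and `F_V(D')` are
isomorphic, since local nilpotency of an element of `W_V` is invariant under isomorphism. -/
theorem even_le_of_equiv {D' : Submodule ℂ Vs} {π' : ZMod 2 → Module.End ℂ Vs}
    {p' : Module.End ℂ Vs} (h : Splitting V0 V1 D π p) (h' : Splitting V0 V1 D' π' p')
    (e : FockSup Vs V0 V1 D ≃ₗ[WeylSup Vs V0 V1] FockSup Vs V0 V1 D') :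
    D' ⊓ V0 ≤ D ⊓ V0 := by
  rintro v ⟨hv, hv0⟩
  refine ⟨?_, hv0⟩
  by_contra hvD
  obtain ⟨n, hn⟩ := h'.locally_nilpotent hv hv0 (e (vacuum V0 V1 D))
  rw [← map_smul, LinearEquiv.map_eq_zero_iff] at hn
  exact h.pow_vacuum_ne_zero hvD hv0 n hn

end nonisomorphism

/-- Lemma 2.2 of the paper: for every sub superspace `D` of `V = V₀ ⊕ V₁`, the mixed Fock
space `F_V(D) = W_V/J(D)` is a simple left `W_V`-module carrying a `ℤ`-grading and a
`ℤ/2`-grading inherited from `W_V`; and `F_V(D) ≇ F_V(D')` whenever the even parts differ,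
`D ⊓ V₀ ≠ D' ⊓ V₀`. -/
theorem mixed_fock_space_simple_graded_nonisomorphic
    (V0 V1 : Submodule ℂ Vs) (hcompl : IsCompl V0 V1)
    (D : Submodule ℂ Vs) (hD : D = D ⊓ V0 ⊔ D ⊓ V1) :
    -- F_V(D) is a simple W_V-module:
    IsSimpleModule (WeylSup Vs V0 V1) (FockSup Vs V0 V1 D) ∧
    -- F_V(D) is ℤ-graded, with the grading inherited from the ℤ-grading of W_V
    -- (deg V = 1, deg V* = -1, the vacuum [1] in degree 0):
    (∃ G : ℤ → Submodule ℂ (FockSup Vs V0 V1 D),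
      DirectSum.IsInternal G ∧
      (idealJ Vs V0 V1 D).mkQ 1 ∈ G 0 ∧
      (∀ (z : ℤ) (v : Vs), ∀ x ∈ G z, wV Vs V0 V1 v • x ∈ G (z + 1)) ∧
      (∀ (z : ℤ) (φ : Module.Dual ℂ Vs), ∀ x ∈ G z, wF Vs V0 V1 φ • x ∈ G (z - 1))) ∧
    -- F_V(D) is ℤ/2-graded, with the parity inherited from W_V
    -- (the vacuum [1] even, homogeneous generators acting by their parity):
    (∃ P : ZMod 2 → Submodule ℂ (FockSup Vs V0 V1 D),
      DirectSum.IsInternal P ∧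
      (idealJ Vs V0 V1 D).mkQ 1 ∈ P 0 ∧
      (∀ (ε μ : ZMod 2) (v : Vs), v ∈ par Vs V0 V1 ε →
        ∀ x ∈ P μ, wV Vs V0 V1 v • x ∈ P (μ + ε)) ∧
      (∀ (ε μ : ZMod 2) (φ : Module.Dual ℂ Vs), φ ∈ dpar Vs V0 V1 ε →
        ∀ x ∈ P μ, wF Vs V0 V1 φ • x ∈ P (μ + ε))) ∧
    -- Fock spaces with mixing sets having different even parts are non-isomorphic:
    (∀ D' : Submodule ℂ Vs, D' = D' ⊓ V0 ⊔ D' ⊓ V1 → D ⊓ V0 ≠ D' ⊓ V0 →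
      IsEmpty ((FockSup Vs V0 V1 D) ≃ₗ[WeylSup Vs V0 V1] (FockSup Vs V0 V1 D'))) := by
  obtain ⟨π, p, h⟩ := exists_splitting hcompl hD
  refine ⟨h.fockData.isSimpleModule h.vacuum_ne_zero, exists_int_grading,
    h.exists_parity_grading, fun D' hD' hne => ⟨fun e => hne ?_⟩⟩
  obtain ⟨π', p', h'⟩ := exists_splitting hcompl hD'
  exact le_antisymm (even_le_of_equiv h' h e.symm) (even_le_of_equiv h h' e)
end
end

section
/- Let g = gl(m|n), u = ⊕_{1≤i≤m, m+1≤j≤m+n} ℂE_{ij}, V = ℂ^{m|n}, A = ℂ[x_{ij} : 1≤i≤m, m+1≤j≤m+n], and let δ act on A ⊗ V by δ(Σ_i f_i v_i) = Σ_{i=1}^m (Σ_{j=m+1}^{m+n} x_{ij} f_j) v_i. Then ker δ = A v_1 + ⋯ + A v_m + K_1, where K_1 = {Σ_{j=m+1}^{m+n} f_j v_j : Σ_{j} x_{ij} f_j = 0 for all 1 ≤ i ≤ m}; im δ = Σ_{j=m+1}^{m+n} A·(Σ_{i=1}^m x_{ij} v_i); hence the standard u-cohomology is H^*(u,V) = (A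 v_1 + ⋯ + A v_m) / (Σ_j A(Σ_i x_{ij} v_i)) ⊕ K_1; and K_1 = 0 if and only if m ≥ n. -/
/-!
Writing `X = (x_{ij})` for the generic `m × n` matrix, `δ` sends `(f₀, f₁)` to `(X f₁, 0)` with
respect to the splitting of a cochain into its even and odd coordinates. Hence a cochain is a
cocycle exactly when its odd part lies in `K₁`, the image of `δ` is spanned by the columns of `X`
(placed in the even part), and `f ↦ ([f₀], f₁)` is a surjection from the cocycles onto
`(A v_1 + ⋯ + A v_m)/im δ × K₁` with kernel `im δ` (`cohomologyMapA`).

`K₁` is the kernel of `X : Aⁿ → Aᵐ`. If `n ≤ m`, the upper `n × n` minor of `X` is a nonzero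
polynomial, since it takes the value `1` where this block is the identity matrix; as `A` is a
domain, the kernel vanishes. Conversely an injective `A`-linear map `Aⁿ → Aᵐ` forces `n ≤ m`,
because `A` is a nontrivial commutative ring.
-/

/-!
STATEMENT 10: standard `u`-cohomology of `gl(m|n)` with coefficients in the natural module
`V = ℂ^{m|n}`, for the parabolic with Levi `gl_m ⊕ gl_n` and nilradical
`u = ⊕_{i ≤ m < j} ℂ E_{ij}`.

The cochain space is `C(u,V) = A ⊗ V` where `A = ℂ[x_{ij}]`, realized concretely as
`M = (Fin m ⊕ Fin n) → A` (the coordinates of `V` in the basis `v_1,…,v_{m+n}`, where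
`inl i ↔ v_i` (`i ≤ m`, even) and `inr j ↔ v_{m+j}` (odd)).  The differential acts by
`δ(Σ f_i v_i) = Σ_{i ≤ m} (Σ_j x_{ij} f_{m+j}) v_i`.
-/

noncomputable section

open MvPolynomial

/-- `A = ℂ[x_{ij} : i ∈ Fin m, j ∈ Fin n]`. -/
abbrev PolyA (m n : ℕ) : Type := MvPolynomial (Fin m × Fin n) ℂ

/-- The cochain space `C(u, V) = A ⊗ V`, realized as coordinate vectors. -/
abbrev CochainA (m n : ℕ) : Type := (Fin m ⊕ Fin n) → PolyA m n

variable (m n : ℕ)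

/-- The differential `δ(Σ_i f_i v_i) = Σ_{i ∈ I₀} (Σ_{j ∈ I₁} x_{ij} f_j) v_i`. -/
noncomputable def deltaA : CochainA m n →ₗ[PolyA m n] CochainA m n :=
  LinearMap.pi fun s =>
    Sum.elim
      (fun i => ∑ j : Fin n, (MvPolynomial.X (i, j) : PolyA m n) •
        (LinearMap.proj (Sum.inr j) : CochainA m n →ₗ[PolyA m n] PolyA m n))
      (fun _ => 0) s

/-- The submodule `A v_1 + ⋯ + A v_m`. -/
def evenPartA : Submodule (PolyA m n) (CochainA m n) where
  carrier := {f | ∀ j : Fin n, f (Sum.inr j) = 0}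
  add_mem' := by intro a b ha hb j; simp [ha j, hb j]
  zero_mem' := by intro j; simp
  smul_mem' := by intro c a ha j; simp [ha j]

/-- `K₁ = {Σ_{j ∈ I₁} f_j v_j : Σ_j x_{ij} f_j = 0 for all i ∈ I₀}`. -/
def KoneA : Submodule (PolyA m n) (CochainA m n) where
  carrier := {f | (∀ i : Fin m, f (Sum.inl i) = 0) ∧
    ∀ i : Fin m, ∑ j : Fin n, MvPolynomial.X (i, j) * f (Sum.inr j) = 0}
  add_mem' := by
    rintro a b ⟨ha1, ha2⟩ ⟨hb1, hb2⟩
    refine ⟨fun i => by simp [ha1 i, hb1 i], fun i => ?_⟩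
    simp only [Pi.add_apply, mul_add, Finset.sum_add_distrib, ha2 i, hb2 i, add_zero]
  zero_mem' := ⟨fun i => rfl, fun i => by simp⟩
  smul_mem' := by
    rintro c a ⟨ha1, ha2⟩
    refine ⟨fun i => by simp [ha1 i], fun i => ?_⟩
    have : ∑ j : Fin n, MvPolynomial.X (i, j) * (c • a) (Sum.inr j)
        = c * ∑ j : Fin n, MvPolynomial.X (i, j) * a (Sum.inr j) := by
      rw [Finset.mul_sum]; congr 1; funext j; simp [smul_eq_mul]; ring
    rw [this, ha2 i, mul_zero]

/-- The inclusion `(f_j)_{j ∈ I₁} ↦ Σ_j f_j v_j` of the odd coordinates. -/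
noncomputable def oddInclA : (Fin n → PolyA m n) →ₗ[PolyA m n] CochainA m n :=
  LinearMap.pi fun s =>
    Sum.elim (fun _ => (0 : (Fin n → PolyA m n) →ₗ[PolyA m n] PolyA m n))
      (fun j => LinearMap.proj j) s

@[simp]
lemma deltaA_inl (f : CochainA m n) (i : Fin m) :
    deltaA m n f (Sum.inl i) = ∑ j : Fin n, MvPolynomial.X (i, j) * f (Sum.inr j) := by
  simp [deltaA]

@[simp]
lemma deltaA_inr (f : CochainA m n) (j : Fin n) : deltaA m n f (Sum.inr j) = 0 := by
  simp [deltaA]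

@[simp]
lemma oddInclA_inl (f : Fin n → PolyA m n) (i : Fin m) : oddInclA m n f (Sum.inl i) = 0 := by
  simp [oddInclA]

@[simp]
lemma oddInclA_inr (f : Fin n → PolyA m n) (j : Fin n) : oddInclA m n f (Sum.inr j) = f j := by
  simp [oddInclA]

lemma mem_evenPartA {f : CochainA m n} :
    f ∈ evenPartA m n ↔ ∀ j : Fin n, f (Sum.inr j) = 0 := Iff.rfl

lemma mem_KoneA {f : CochainA m n} :
    f ∈ KoneA m n ↔ (∀ i : Fin m, f (Sum.inl i) = 0) ∧
      ∀ i : Fin m, ∑ j : Fin n, MvPolynomial.X (i, j) * f (Sum.inr j) = 0 := Iff.rfl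

lemma mem_ker_deltaA {f : CochainA m n} :
    f ∈ LinearMap.ker (deltaA m n) ↔
      ∀ i : Fin m, ∑ j : Fin n, MvPolynomial.X (i, j) * f (Sum.inr j) = 0 := by
  rw [LinearMap.mem_ker]
  constructor
  · intro h i
    rw [← deltaA_inl, h, Pi.zero_apply]
  · intro h
    funext s
    rcases s with i | j
    · simpa using h i
    · simp

lemma range_deltaA_le_evenPartA : LinearMap.range (deltaA m n) ≤ evenPartA m n := by
  rintro _ ⟨f, rfl⟩ j
  simp

lemma evenPartA_le_ker : evenPartA m n ≤ LinearMap.ker (deltaA m n) := by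
  intro f hf
  rw [mem_ker_deltaA]
  intro i
  simp [(mem_evenPartA m n).1 hf]

lemma KoneA_le_ker : KoneA m n ≤ LinearMap.ker (deltaA m n) :=
  fun _ hf => (mem_ker_deltaA m n).2 hf.2

/-- The projection `Σ_s f_s v_s ↦ Σ_{i ∈ I₀} f_i v_i` onto the even coordinates. -/
def evenProjA : CochainA m n →ₗ[PolyA m n] evenPartA m n where
  toFun f := ⟨Sum.elim (fun i => f (Sum.inl i)) fun _ => 0, fun _ => rfl⟩
  map_add' f g := by ext1; funext s; rcases s with i | j <;> simp
  map_smul' c f := by ext1; funext s; rcases s with i | j <;> simp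

/-- The projection `Σ_s f_s v_s ↦ Σ_{j ∈ I₁} f_j v_j` of a cocycle onto its odd coordinates,
which lie in `K₁`. -/
def oddProjA : LinearMap.ker (deltaA m n) →ₗ[PolyA m n] KoneA m n where
  toFun f := ⟨oddInclA m n fun j => f.1 (Sum.inr j),
    fun i => by simp, by simpa using (mem_ker_deltaA m n).1 f.2⟩
  map_add' f g := by ext1; funext s; rcases s with i | j <;> simp
  map_smul' c f := by ext1; funext s; rcases s with i | j <;> simp

@[simp]
lemma evenProjA_inl (f : CochainA m n) (i : Fin m) :
    (evenProjA m n f : CochainA m n) (Sum.inl i) = f (Sum.inl i) := rfl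

@[simp]
lemma evenProjA_inr (f : CochainA m n) (j : Fin n) :
    (evenProjA m n f : CochainA m n) (Sum.inr j) = 0 := rfl

@[simp]
lemma oddProjA_inl (f : LinearMap.ker (deltaA m n)) (i : Fin m) :
    (oddProjA m n f : CochainA m n) (Sum.inl i) = 0 := by
  simp [oddProjA]

@[simp]
lemma oddProjA_inr (f : LinearMap.ker (deltaA m n)) (j : Fin n) :
    (oddProjA m n f : CochainA m n) (Sum.inr j) = f.1 (Sum.inr j) := by
  simp [oddProjA]

lemma evenProjA_of_mem {f : CochainA m n} (hf : f ∈ evenPartA m n) :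
    (evenProjA m n f : CochainA m n) = f := by
  funext s
  rcases s with i | j
  · simp
  · simpa using ((mem_evenPartA m n).1 hf j).symm

lemma evenProjA_add_oddProjA (f : LinearMap.ker (deltaA m n)) :
    (evenProjA m n f.1 : CochainA m n) + (oddProjA m n f : CochainA m n) = f.1 := by
  funext s
  rcases s with i | j <;> simp

lemma ker_deltaA : LinearMap.ker (deltaA m n) = evenPartA m n ⊔ KoneA m n := by
  apply le_antisymm
  · intro f hf
    have h : _ = f := evenProjA_add_oddProjA m n ⟨f, hf⟩
    rw [← h]
    exact Submodule.add_mem_sup (Subtype.prop _) (Subtype.prop _)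
  · exact sup_le (evenPartA_le_ker m n) (KoneA_le_ker m n)

lemma range_deltaA :
    LinearMap.range (deltaA m n) =
      Submodule.span (PolyA m n)
        (Set.range fun j : Fin n =>
          (Sum.elim (fun i => (MvPolynomial.X (i, j) : PolyA m n)) fun _ => 0 :
            CochainA m n)) := by
  apply le_antisymm
  · rintro _ ⟨f, rfl⟩
    have h : deltaA m n f = ∑ j : Fin n, f (Sum.inr j) •
        (Sum.elim (fun i => (MvPolynomial.X (i, j) : PolyA m n)) fun _ => 0 :
          CochainA m n) := by
      funext s
      rcases s with i | j
      · simp [Finset.sum_apply, mul_comm]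
      · simp [Finset.sum_apply]
    rw [h]
    exact Submodule.sum_mem _ fun j _ =>
      Submodule.smul_mem _ _ (Submodule.subset_span ⟨j, rfl⟩)
  · rw [Submodule.span_le]
    rintro _ ⟨j, rfl⟩
    refine ⟨oddInclA m n (Pi.single j 1), ?_⟩
    funext s
    rcases s with i | k
    · simp [Pi.single_apply]
    · simp

/-- The generic `m × n` matrix with entries `x_{ij}`. -/
def genericA : Matrix (Fin m) (Fin n) (PolyA m n) :=
  Matrix.of fun i j => MvPolynomial.X (i, j)

lemma oddInclA_mem_KoneA {v : Fin n → PolyA m n} :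
    oddInclA m n v ∈ KoneA m n ↔ (genericA m n).mulVec v = 0 := by
  simp [mem_KoneA, funext_iff, Matrix.mulVec, dotProduct, genericA]

lemma KoneA_eq_bot_iff_injective :
    KoneA m n = ⊥ ↔ Function.Injective (genericA m n).mulVecLin := by
  rw [← LinearMap.ker_eq_bot, LinearMap.ker_eq_bot', Submodule.eq_bot_iff]
  constructor
  · intro h v hv
    have h0 := h _ ((oddInclA_mem_KoneA m n).2 hv)
    funext j
    simpa using congrFun h0 (Sum.inr j)
  · intro h f hf
    have hv : (fun j => f (Sum.inr j)) = 0 :=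
      h _ (funext fun i => by
        simpa [Matrix.mulVec, dotProduct, genericA] using hf.2 i)
    funext s
    rcases s with i | j
    · exact hf.1 i
    · exact congrFun hv j

/-- The minor of the generic matrix on its first `n` rows is a nonzero polynomial. -/
lemma det_genericA_submatrix_ne_zero (h : n ≤ m) :
    ((genericA m n).submatrix (Fin.castLE h) id).det ≠ 0 := by
  intro h0
  -- The point at which the upper `n × n` block becomes the identity matrix.
  let p : Fin m × Fin n → ℂ := fun q => if (q.1 : ℕ) = q.2 then 1 else 0
  have h1 := congrArg (MvPolynomial.eval p) h0
  rw [RingHom.map_det, map_zero] at h1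
  have h2 : (MvPolynomial.eval p).mapMatrix ((genericA m n).submatrix (Fin.castLE h) id) = 1 := by
    ext i j
    simp [genericA, p, Matrix.one_apply, Fin.ext_iff]
  rw [h2, Matrix.det_one] at h1
  exact one_ne_zero h1

lemma KoneA_eq_bot_iff : KoneA m n = ⊥ ↔ n ≤ m := by
  rw [KoneA_eq_bot_iff_injective]
  constructor
  · exact le_of_fin_injective (PolyA m n) (genericA m n).mulVecLin
  · intro h
    rw [← LinearMap.ker_eq_bot, LinearMap.ker_eq_bot']
    intro v hv
    refine Matrix.eq_zero_of_mulVec_eq_zero (det_genericA_submatrix_ne_zero m n h) ?_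
    funext i
    exact congrFun hv (Fin.castLE h i)

/-- The map `f ↦ ([f₀], f₁)` from cocycles to `(A v_1 + ⋯ + A v_m)/im δ × K₁`, where `f₀` and `f₁`
are the even and odd parts of `f`. -/
def cohomologyMapA : LinearMap.ker (deltaA m n) →ₗ[PolyA m n]
    (↥(evenPartA m n) ⧸ (LinearMap.range (deltaA m n)).comap (evenPartA m n).subtype)
      × ↥(KoneA m n) :=
  (Submodule.mkQ _ ∘ₗ evenProjA m n ∘ₗ (LinearMap.ker (deltaA m n)).subtype).prod (oddProjA m n)

lemma ker_cohomologyMapA :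
    LinearMap.ker (cohomologyMapA m n) =
      (LinearMap.range (deltaA m n)).comap (LinearMap.ker (deltaA m n)).subtype := by
  ext f
  have key : f ∈ LinearMap.ker (cohomologyMapA m n) ↔
      (evenProjA m n f.1 : CochainA m n) ∈ LinearMap.range (deltaA m n) ∧
        oddProjA m n f = 0 := by
    rw [cohomologyMapA, LinearMap.ker_prod, Submodule.mem_inf, LinearMap.mem_ker,
      LinearMap.mem_ker]
    exact and_congr_left' (Submodule.Quotient.mk_eq_zero _)
  rw [key, Submodule.mem_comap, Submodule.subtype_apply]
  constructor
  · rintro ⟨h1, h2⟩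
    rw [← evenProjA_add_oddProjA m n f, h2]
    simpa using h1
  · intro h
    have he := range_deltaA_le_evenPartA m n h
    refine ⟨by rwa [evenProjA_of_mem m n he], ?_⟩
    ext1
    funext s
    rcases s with i | j
    · simp
    · simpa using he j

lemma cohomologyMapA_surjective : Function.Surjective (cohomologyMapA m n) := by
  rintro ⟨q, k⟩
  obtain ⟨e, rfl⟩ := Submodule.mkQ_surjective _ q
  refine ⟨⟨e.1 + k.1, Submodule.add_mem _ (evenPartA_le_ker m n e.2) (KoneA_le_ker m n k.2)⟩, ?_⟩
  refine Prod.ext (congrArg (Submodule.mkQ _) (?_ : evenProjA m n (e.1 + k.1) = e)) ?_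
  · ext1
    funext s
    rcases s with i | j
    · simp [k.2.1 i]
    · simpa using (e.2 j).symm
  · change oddProjA m n _ = k
    ext1
    funext s
    rcases s with i | j
    · simpa using (k.2.1 i).symm
    · simpa using e.2 j

/-- Standard `u`-cohomology of `gl(m|n)` on the natural module (Section 4.1.1 of the paper):
`ker δ = (A v_1 + ⋯ + A v_m) + K₁`, `im δ = Σ_{j ∈ I₁} A (Σ_{i ∈ I₀} x_{ij} v_i)`
(equivalently, `im δ = δ(odd coordinate vectors)`), `K₁ = 0` iff `m ≥ n`, and consequently
`H^*(u,V) ≅ (A v_1 + ⋯ + A v_m)/im δ ⊕ K₁`. -/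
theorem standard_u_cohomology_glmn_natural :
    LinearMap.ker (deltaA m n) = evenPartA m n ⊔ KoneA m n ∧
    LinearMap.range (deltaA m n) =
      Submodule.span (PolyA m n)
        (Set.range fun j : Fin n =>
          (Sum.elim (fun i => (MvPolynomial.X (i, j) : PolyA m n)) fun _ => 0 : CochainA m n)) ∧
    LinearMap.range (deltaA m n) ≤ evenPartA m n ∧
    (KoneA m n = ⊥ ↔ n ≤ m) ∧
    Nonempty
      ((↥(LinearMap.ker (deltaA m n)) ⧸
          (LinearMap.range (deltaA m n)).comap (LinearMap.ker (deltaA m n)).subtype)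
        ≃ₗ[PolyA m n]
       (↥(evenPartA m n) ⧸ (LinearMap.range (deltaA m n)).comap (evenPartA m n).subtype)
         × ↥(KoneA m n)) := by
  exact ⟨ker_deltaA m n, range_deltaA m n, range_deltaA_le_evenPartA m n, KoneA_eq_bot_iff m n,
    ⟨(Submodule.quotEquivOfEq _ _ (ker_cohomologyMapA m n).symm).trans
      ((cohomologyMapA m n).quotKerEquivOfSurjective (cohomologyMapA_surjective m n))⟩⟩
end
end

section
/- Let A = ℂ[x_{ij} : 1 ≤ i ≤ m, 1 ≤ j ≤ n] be the polynomial ring in mn commuting variables over ℂ. The A-module of solutions (f_1, …, f_n) ∈ A^n of the system of equations Σ_{j=1}^n x_{ij} f_j = 0 for all i = 1, …, m is the zero module if and only if m ≥ n. -/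
/-!
STATEMENT 11: Let `A = ℂ[x_{ij} : 1 ≤ i ≤ m, 1 ≤ j ≤ n]` be the polynomial ring in `m*n`
commuting variables.  The `A`-module of solutions `(f_1, …, f_n) ∈ A^n` of the system
`Σ_j x_{ij} f_j = 0` (for all `i = 1, …, m`) is the zero module iff `m ≥ n`.

We formalize the solution module as the kernel of the `A`-linear map `A^n → A^m` given by
multiplication by the generic matrix `X = (x_{ij})`.
-/

/-!
If the kernel vanishes, then `A^n` embeds `A`-linearly into `A^m`, and `n ≤ m` because a nontrivial
commutative ring satisfies the strong rank condition. Conversely, if `n ≤ m`, the top `n × n`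
submatrix of `X` has nonzero determinant (it specializes to the identity matrix), so over the
domain `A` it already annihilates no nonzero vector.
-/

noncomputable section

open MvPolynomial

/-- The polynomial algebra `ℂ[x_{ij}]` on the entries of a generic `m × n` matrix. -/
abbrev GenPolyAlg (m n : ℕ) : Type := MvPolynomial (Fin m × Fin n) ℂ

/-- The `A`-linear map `A^n → A^m`, `(f_j)_j ↦ (Σ_j x_{ij} f_j)_i`, i.e. multiplication by the
generic matrix `X = (x_{ij})`. -/
noncomputable def genericMatrixMul (m n : ℕ) :
    (Fin n → GenPolyAlg m n) →ₗ[GenPolyAlg m n] (Fin m → GenPolyAlg m n) :=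
  LinearMap.pi fun i =>
    ∑ j : Fin n, (MvPolynomial.X (i, j) : GenPolyAlg m n) • (LinearMap.proj j : (Fin n → GenPolyAlg m n) →ₗ[GenPolyAlg m n] GenPolyAlg m n)

/-- The top `n × n` minor of the generic matrix is nonzero, since it specializes to `det 1 = 1`
at the point `x_{ij} = δ_{ij}`. -/
lemma det_topMinor_ne_zero {m n : ℕ} (h : n ≤ m) :
    (Matrix.of fun i j : Fin n => (X (Fin.castLE h i, j) : GenPolyAlg m n)).det ≠ 0 := by
  intro h0
  let e : GenPolyAlg m n →+* ℂ :=
    eval fun p => if (p.1 : ℕ) = (p.2 : ℕ) then 1 else 0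
  have h1 := congrArg e h0
  have h2 : e.mapMatrix (Matrix.of fun i j : Fin n =>
      (X (Fin.castLE h i, j) : GenPolyAlg m n)) = 1 := by
    ext i j
    simp [e, Matrix.one_apply, Fin.ext_iff]
  rw [RingHom.map_det, h2] at h1
  simp at h1

/-- The module of solutions `(f_1,…,f_n)` of `Σ_j x_{ij} f_j = 0` (for all `i`) over the
polynomial ring `A = ℂ[x_{ij}]` is zero if and only if `m ≥ n`. -/
theorem kernel_of_generic_matrix_eq_bot_iff (m n : ℕ) :
    LinearMap.ker (genericMatrixMul m n) = ⊥ ↔ n ≤ m := by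
  rw [LinearMap.ker_eq_bot]
  constructor
  · exact le_of_fin_injective (GenPolyAlg m n) _
  · intro h
    rw [← LinearMap.ker_eq_bot, LinearMap.ker_eq_bot']
    intro f hf
    refine Matrix.eq_zero_of_mulVec_eq_zero (det_topMinor_ne_zero h) ?_
    ext1 i
    simpa [genericMatrixMul, Matrix.mulVec, dotProduct] using congrFun hf (Fin.castLE h i)
end
end

section
/- Let u = ⊕_{1≤i≤m, m+1≤j≤m+n} ℂE_{ij} ⊂ gl(m|n) and K = K_λ a Kac module, and consider the mixed u-cohomology with mixing set D = Πu*, computed on the cochain space ℂ[y_{ij}, E_{ij}] ⊗ K̄^0_λ with y_{ij} = ∂/∂x_{ij} (dual Fock space). Define e = Σ_{i,j} E_{ij} ∂/∂y_{ij}, f = Σ_{i,j} y_{ij} ∂/∂E_{ij}, h_1 = Σ E_{ij}∂/∂E_{ij}, h_2 = Σ y_{ij}∂/∂y_{ij}. Then these operators give a gl(1|1)-action with ef + fe = h_1 + h_2, the differential is δ = −e ⊗ id, and the mixed cohomology is H^0_{Πu*}(u, K) ≅ K̄^0_λ and H^{−i}_{Πu*}(u, K) = 0 for all i > 0. -/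
/-!
The cohomology is computed by a contracting homotopy built from the `gl(1|1)`-relation
`ef + fe = h₁ + h₂` (`opE_opF_anticomm`).  On a cocycle `c` of `y`-degree `i`, that relation reads
`e (f c) = (h₁ + i) c`, so `c` is a coboundary as soon as `h₁ + i` can be inverted on the space of
cocycles.

The Grassmann degree operator `h₁` acts on `⋀ᵏ` by `k` (`grassNumber_apply_of_mem`), so
`h₁ + s` is inverted on `⋀ᵏ` by `(k + s)⁻¹`.  Let `grassInv s` be the operator acting so on every
`⋀ᵏ`, with `0⁻¹ = 0`.  Since left multiplication by `E_{ij}` raises the degree by one,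
`e ∘ grassInv s = grassInv (s - 1) ∘ e` (`opE_comp_grassInv`), and hence `grassInv s` preserves
cocycles.  For `i > 0` one has `(h₁ + i) ∘ grassInv i = id`, so `c = e (f (grassInv i c))`.
For `i = 0` one has `h₁ ∘ grassInv 0 = id - ε`, with `ε` the projection onto `⋀⁰`, so `c` is
cohomologous to `ε c`.  A cochain of `y`-degree `0` has constant polynomial part
(`constant_part_of_degree_zero`), so `ε c = 1 ⊗ 1 ⊗ φ c`, where `φ` takes the constant term in both
`y` and `E`.  The map `φ` kills coboundaries because `ε` kills every `E_{ij} ω`; it therefore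
induces the isomorphism `H⁰ ≅ K0`.
-/

set_option synthInstance.maxHeartbeats 1000000
set_option maxHeartbeats 1000000

/-!
STATEMENT 17: mixed `u`-cohomology of a Kac module `K = K_λ` of `gl(m|n)` for the mixing set
`D = Πu*` (dual Fock space).  The cochain space is `ℂ[y_{ij}, E_{ij}] ⊗ K̄⁰_λ` with
`y_{ij} = ∂/∂x_{ij}`.  The operators
`e = Σ E_{ij} ∂/∂y_{ij}`, `f = Σ y_{ij} ∂/∂E_{ij}`,
`h₁ = Σ E_{ij}∂/∂E_{ij}`, `h₂ = Σ y_{ij}∂/∂y_{ij}`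
give a `gl(1|1)`-action with `ef + fe = h₁ + h₂`; the differential is `δ = -e ⊗ id`, and the
mixed cohomology is `H⁰_{Πu*}(u,K) ≅ K̄⁰_λ`, `H^{-i}_{Πu*}(u,K) = 0` for `i > 0`
(the `ℤ`-degree of an element of `y`-degree `i` being `-i`).
-/

noncomputable section

open MvPolynomial TensorProduct

/-- `ℂ[y_{ij}]`, the dual Fock space. -/
abbrev PolyY (m n : ℕ) : Type := MvPolynomial (Fin m × Fin n) ℂ

/-- The Grassmann algebra `ℂ[E_{ij}]`. -/
abbrev GrassY (m n : ℕ) : Type := ExteriorAlgebra ℂ ((Fin m × Fin n) → ℂ)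

/-- `R = ℂ[y_{ij}, E_{ij}]`. -/
abbrev SuperRY (m n : ℕ) : Type := PolyY m n ⊗[ℂ] GrassY m n

variable (m n : ℕ) (K0 : Type) [AddCommGroup K0] [Module ℂ K0]

/-- The cochain space `C_{Πu*}(u, K) = ℂ[y_{ij}, E_{ij}] ⊗ K̄⁰_λ`. -/
abbrev CochainY (m n : ℕ) (K0 : Type) [AddCommGroup K0] [Module ℂ K0] : Type :=
  SuperRY m n ⊗[ℂ] K0

/-- The odd generator `E_{ij}`. -/
noncomputable def EgenY (ij : Fin m × Fin n) : GrassY m n :=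
  ExteriorAlgebra.ι ℂ (Pi.single ij 1)

/-- The odd superderivation `∂/∂E_{ij}` (left contraction). -/
noncomputable def EderY (ij : Fin m × Fin n) : GrassY m n →ₗ[ℂ] GrassY m n :=
  CliffordAlgebra.contractLeft (LinearMap.proj ij)

/-- `e = Σ_{ij} E_{ij} ∂/∂y_{ij}`. -/
noncomputable def opEY : SuperRY m n →ₗ[ℂ] SuperRY m n :=
  ∑ ij : Fin m × Fin n,
    TensorProduct.map (MvPolynomial.pderiv ij).toLinearMap
      (LinearMap.mulLeft ℂ (EgenY m n ij))

/-- `f = Σ_{ij} y_{ij} ∂/∂E_{ij}`. -/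
noncomputable def opFY : SuperRY m n →ₗ[ℂ] SuperRY m n :=
  ∑ ij : Fin m × Fin n,
    TensorProduct.map (LinearMap.mulLeft ℂ (MvPolynomial.X ij)) (EderY m n ij)

/-- `h₁ = Σ_{ij} E_{ij} ∂/∂E_{ij}`. -/
noncomputable def opH1Y : SuperRY m n →ₗ[ℂ] SuperRY m n :=
  ∑ ij : Fin m × Fin n,
    TensorProduct.map LinearMap.id
      ((LinearMap.mulLeft ℂ (EgenY m n ij)).comp (EderY m n ij))

/-- `h₂ = Σ_{ij} y_{ij} ∂/∂y_{ij}`. -/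
noncomputable def opH2Y : SuperRY m n →ₗ[ℂ] SuperRY m n :=
  ∑ ij : Fin m × Fin n,
    TensorProduct.map
      ((LinearMap.mulLeft ℂ (MvPolynomial.X ij)).comp (MvPolynomial.pderiv ij).toLinearMap)
      LinearMap.id

/-- The differential `δ = -e ⊗ id` on `C_{Πu*}(u,K)`. -/
noncomputable def deltaY : CochainY m n K0 →ₗ[ℂ] CochainY m n K0 :=
  TensorProduct.map (-opEY m n) LinearMap.id

/-- The `y`-degree-`i` subspace of `C_{Πu*}(u,K)` (of `ℤ`-degree `-i`):
the `i`-eigenspace of the number operator `h₂ ⊗ id`. -/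
noncomputable def CdegY (i : ℕ) : Submodule ℂ (CochainY m n K0) where
  carrier := {c | TensorProduct.map (opH2Y m n) LinearMap.id c = ((i : ℕ) : ℂ) • c}
  add_mem' := by
    intro a b ha hb
    simp only [Set.mem_setOf_eq] at *
    rw [map_add, ha, hb, smul_add]
  zero_mem' := by simp
  smul_mem' := by
    intro c a ha
    simp only [Set.mem_setOf_eq] at *
    rw [map_smul, ha, smul_comm]

/-- The space of cocycles of `ℤ`-degree `-i`. -/
noncomputable def cocyclesY (i : ℕ) : Submodule ℂ (CochainY m n K0) :=
  LinearMap.ker (deltaY m n K0) ⊓ CdegY m n K0 i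

/-! ### The `gl(1|1)` relation -/

lemma EderY_EgenY_mul (a b : Fin m × Fin n) (w : GrassY m n) :
    EderY m n b (EgenY m n a * w)
      = (if a = b then w else 0) - EgenY m n a * EderY m n b w := by
  have h := CliffordAlgebra.contractLeft_ι_mul (Q := (0 : QuadraticForm ℂ ((Fin m × Fin n) → ℂ)))
    (d := (LinearMap.proj b : ((Fin m × Fin n) → ℂ) →ₗ[ℂ] ℂ)) (Pi.single a 1) w
  refine h.trans ?_
  congr 1
  by_cases hab : a = b
  · subst hab; simp
  · simp [hab, Ne.symm hab]

lemma opE_opF_anticomm :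
    opEY m n ∘ₗ opFY m n + opFY m n ∘ₗ opEY m n = opH1Y m n + opH2Y m n := by
  refine TensorProduct.ext' fun p w => ?_
  simp only [opEY, opFY, opH1Y, opH2Y, LinearMap.add_apply, LinearMap.comp_apply,
    LinearMap.sum_apply, TensorProduct.map_tmul, map_sum, LinearMap.mulLeft_apply,
    LinearMap.id_apply, EderY_EgenY_mul, Derivation.coeFn_coe,
    Derivation.leibniz, pderiv_X, smul_eq_mul]
  rw [Finset.sum_comm, ← Finset.sum_add_distrib, ← Finset.sum_add_distrib]
  refine Finset.sum_congr rfl fun a _ => ?_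
  rw [← Finset.sum_add_distrib]
  -- Only the diagonal terms survive.
  rw [Finset.sum_eq_single a]
  · simp [TensorProduct.add_tmul, TensorProduct.tmul_sub]
    abel
  · intro b _ hb
    simp only [Pi.single_apply, if_neg hb, if_neg (Ne.symm hb), mul_zero, add_zero, zero_sub]
    rw [← TensorProduct.tmul_add, add_neg_cancel, TensorProduct.tmul_zero]
  · simp

/-! ### The Grassmann degree and its inverse -/

/-- The Grassmann number operator `Σ E_{ij} ∂/∂E_{ij}` on `ℂ[E_{ij}]`. -/
noncomputable def grassNumber : GrassY m n →ₗ[ℂ] GrassY m n :=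
  ∑ ij : Fin m × Fin n, (LinearMap.mulLeft ℂ (EgenY m n ij)).comp (EderY m n ij)

lemma opH1Y_eq : opH1Y m n = TensorProduct.map LinearMap.id (grassNumber m n) := by
  refine TensorProduct.ext' fun p w => ?_
  simp [opH1Y, grassNumber, LinearMap.sum_apply, TensorProduct.tmul_sum]

lemma sum_smul_EgenY (v : (Fin m × Fin n) → ℂ) :
    ∑ a, v a • EgenY m n a = ExteriorAlgebra.ι ℂ v := by
  simp only [EgenY, ← map_smul, ← map_sum]
  congr 1
  ext b
  simp [Finset.sum_apply, Pi.single_apply]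

lemma grassNumber_ι_mul (v : (Fin m × Fin n) → ℂ) (w : GrassY m n) :
    grassNumber m n (ExteriorAlgebra.ι ℂ v * w)
      = ExteriorAlgebra.ι ℂ v * w + ExteriorAlgebra.ι ℂ v * grassNumber m n w := by
  have hder : ∀ a, EderY m n a (ExteriorAlgebra.ι ℂ v * w)
      = v a • w - ExteriorAlgebra.ι ℂ v * EderY m n a w := fun a =>
    CliffordAlgebra.contractLeft_ι_mul (Q := (0 : QuadraticForm ℂ ((Fin m × Fin n) → ℂ)))
      (d := (LinearMap.proj a : ((Fin m × Fin n) → ℂ) →ₗ[ℂ] ℂ)) v w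
  have hanti : ∀ (a : Fin m × Fin n) (z : GrassY m n),
      EgenY m n a * (ExteriorAlgebra.ι ℂ v * z)
        = - (ExteriorAlgebra.ι ℂ v * (EgenY m n a * z)) := by
    intro a z
    have h := ExteriorAlgebra.ι_add_mul_swap (R := ℂ) v (Pi.single a 1)
    rw [← mul_assoc, ← mul_assoc, ← neg_mul]
    congr 1
    rw [eq_neg_iff_add_eq_zero, add_comm]
    exact h
  simp only [grassNumber, LinearMap.sum_apply, LinearMap.comp_apply, LinearMap.mulLeft_apply, hder,
    mul_sub, hanti, sub_neg_eq_add, Finset.sum_add_distrib, ← Finset.mul_sum]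
  congr 1
  rw [← sum_smul_EgenY m n v, Finset.sum_mul]
  simp

lemma grassNumber_apply_of_mem {k : ℕ} {w : GrassY m n}
    (hw : w ∈ ⋀[ℂ]^k ((Fin m × Fin n) → ℂ)) :
    grassNumber m n w = (k : ℂ) • w := by
  induction hw using Submodule.pow_induction_on_left' with
  | algebraMap r =>
    simp only [grassNumber, LinearMap.sum_apply, LinearMap.comp_apply, Nat.cast_zero, zero_smul]
    refine Finset.sum_eq_zero fun a _ => ?_
    have h : EderY m n a 1 = 0 :=
      CliffordAlgebra.contractLeft_one (Q := (0 : QuadraticForm ℂ ((Fin m × Fin n) → ℂ)))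
        (d := (LinearMap.proj a : ((Fin m × Fin n) → ℂ) →ₗ[ℂ] ℂ))
    rw [Algebra.algebraMap_eq_smul_one, map_smul, h, smul_zero, map_zero]
  | add x y i hx hy hx' hy' => rw [map_add, hx', hy', smul_add]
  | mem_mul u hu i x hx hx' =>
    obtain ⟨v, rfl⟩ := hu
    rw [grassNumber_ι_mul, hx', mul_smul_comm, Nat.cast_succ, add_smul, one_smul, add_comm]

/-- The operator on `ℂ[E_{ij}]` acting on the degree `k` part as the scalar `(k + s)⁻¹`
(so as `0` where `k + s = 0`). -/
noncomputable def grassInv (s : ℂ) : GrassY m n →ₗ[ℂ] GrassY m n :=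
  DirectSum.toModule ℂ ℕ (GrassY m n)
      (fun k => ((k : ℂ) + s)⁻¹ • (⋀[ℂ]^k ((Fin m × Fin n) → ℂ)).subtype) ∘ₗ
    (DirectSum.decomposeLinearEquiv (fun k : ℕ => ⋀[ℂ]^k ((Fin m × Fin n) → ℂ))).toLinearMap

lemma grassInv_apply_of_mem (s : ℂ) {k : ℕ} {w : GrassY m n}
    (hw : w ∈ ⋀[ℂ]^k ((Fin m × Fin n) → ℂ)) :
    grassInv m n s w = ((k : ℂ) + s)⁻¹ • w := by
  rw [grassInv, LinearMap.comp_apply, LinearEquiv.coe_coe, DirectSum.decomposeLinearEquiv_apply,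
    DirectSum.decompose_of_mem (fun k : ℕ => ⋀[ℂ]^k ((Fin m × Fin n) → ℂ)) hw]
  erw [DirectSum.toModule_lof]
  simp

/-- Linear maps out of the Grassmann algebra agree once they agree on every homogeneous part. -/
lemma grass_hom_ext {V : Type*} [AddCommGroup V] [Module ℂ V] {A B : GrassY m n →ₗ[ℂ] V}
    (h : ∀ (k : ℕ) (w : GrassY m n), w ∈ ⋀[ℂ]^k ((Fin m × Fin n) → ℂ) → A w = B w) : A = B := by
  refine LinearMap.ext fun w => ?_
  refine DirectSum.Decomposition.inductionOn (fun k : ℕ => ⋀[ℂ]^k ((Fin m × Fin n) → ℂ))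
    (motive := fun w => A w = B w) (by simp) (fun w => h _ _ w.2) (fun x y hx hy => ?_) w
  rw [map_add, map_add, hx, hy]

lemma EgenY_mul_mem (a : Fin m × Fin n) {k : ℕ} {w : GrassY m n}
    (hw : w ∈ ⋀[ℂ]^k ((Fin m × Fin n) → ℂ)) :
    EgenY m n a * w ∈ ⋀[ℂ]^(k + 1) ((Fin m × Fin n) → ℂ) := by
  change _ ∈ LinearMap.range (ExteriorAlgebra.ι ℂ) ^ (k + 1)
  rw [pow_succ']
  exact Submodule.mul_mem_mul ⟨_, rfl⟩ hw

lemma EgenY_mul_grassInv (a : Fin m × Fin n) (s : ℂ) :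
    LinearMap.mulLeft ℂ (EgenY m n a) ∘ₗ grassInv m n s
      = grassInv m n (s - 1) ∘ₗ LinearMap.mulLeft ℂ (EgenY m n a) := by
  refine grass_hom_ext m n fun k w hw => ?_
  simp only [LinearMap.comp_apply, LinearMap.mulLeft_apply]
  rw [grassInv_apply_of_mem m n s hw, grassInv_apply_of_mem m n _ (EgenY_mul_mem m n a hw),
    mul_smul_comm]
  congr 2
  push_cast
  ring

lemma grassNumber_add_comp_grassInv {i : ℕ} (hi : 0 < i) :
    (grassNumber m n + (i : ℂ) • LinearMap.id) ∘ₗ grassInv m n i = LinearMap.id := by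
  refine grass_hom_ext m n fun k w hw => ?_
  have h : (k : ℂ) + i ≠ 0 := by
    exact_mod_cast (by omega : k + i ≠ 0)
  simp only [LinearMap.comp_apply, LinearMap.add_apply, LinearMap.smul_apply, LinearMap.id_apply]
  rw [grassInv_apply_of_mem m n _ hw, map_smul, grassNumber_apply_of_mem m n hw, smul_comm (i : ℂ),
    ← smul_add, ← add_smul, smul_smul, inv_mul_cancel₀ h, one_smul]

/-- The projection of `ℂ[E_{ij}]` onto its degree `0` part `ℂ`. -/
noncomputable def grassProj : GrassY m n →ₗ[ℂ] GrassY m n :=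
  Algebra.linearMap ℂ (GrassY m n) ∘ₗ (ExteriorAlgebra.algebraMapInv (R := ℂ)).toLinearMap

lemma algebraMapInv_EgenY_mul (a : Fin m × Fin n) (w : GrassY m n) :
    ExteriorAlgebra.algebraMapInv (EgenY m n a * w) = 0 := by
  simp [EgenY, ExteriorAlgebra.algebraMapInv]

lemma grassNumber_comp_grassInv_zero :
    grassNumber m n ∘ₗ grassInv m n 0 = LinearMap.id - grassProj m n := by
  refine grass_hom_ext m n fun k w hw => ?_
  simp only [LinearMap.comp_apply, LinearMap.sub_apply, LinearMap.id_apply]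
  rw [grassInv_apply_of_mem m n _ hw, map_smul, grassNumber_apply_of_mem m n hw, add_zero]
  induction hw using Submodule.pow_induction_on_left' with
  | algebraMap r => simp [grassProj, ExteriorAlgebra.algebraMapInv]
  | add x y i hx hy hx' hy' =>
    rw [smul_add, smul_add, hx', hy', map_add]
    abel
  | mem_mul u hu i x hx hx' =>
    obtain ⟨v, rfl⟩ := hu
    have h : ((i.succ : ℕ) : ℂ) ≠ 0 := Nat.cast_ne_zero.mpr (Nat.succ_ne_zero i)
    rw [smul_smul, inv_mul_cancel₀ h, one_smul]
    simp [grassProj, ExteriorAlgebra.algebraMapInv]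

/-! ### The polynomial degree -/

/-- The polynomial number operator `Σ y_{ij} ∂/∂y_{ij}` on `ℂ[y_{ij}]`. -/
noncomputable def polyNumber : PolyY m n →ₗ[ℂ] PolyY m n :=
  ∑ ij : Fin m × Fin n,
    (LinearMap.mulLeft ℂ (MvPolynomial.X ij)).comp (MvPolynomial.pderiv ij).toLinearMap

lemma opH2Y_eq : opH2Y m n = TensorProduct.map (polyNumber m n) LinearMap.id := by
  refine TensorProduct.ext' fun p w => ?_
  simp [opH2Y, polyNumber, LinearMap.sum_apply, TensorProduct.sum_tmul]

lemma polyNumber_monomial (d : Fin m × Fin n →₀ ℕ) (r : ℂ) :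
    polyNumber m n (monomial d r) = (d.degree : ℂ) • monomial d r := by
  simp only [polyNumber, LinearMap.sum_apply, LinearMap.comp_apply, LinearMap.mulLeft_apply,
    Derivation.coeFn_coe, X_mul_pderiv_monomial]
  rw [← Finset.sum_smul, Finsupp.degree_eq_sum, Nat.cast_smul_eq_nsmul]

/-- The operator on `ℂ[y_{ij}]` acting on monomials of degree `k` as the scalar `k⁻¹`, and as `0` on
constants. -/
noncomputable def polyInv : PolyY m n →ₗ[ℂ] PolyY m n :=
  (MvPolynomial.basisMonomials (Fin m × Fin n) ℂ).constr ℂ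
    fun d => (d.degree : ℂ)⁻¹ • monomial d 1

/-- The projection of `ℂ[y_{ij}]` onto the constants. -/
noncomputable def polyProj : PolyY m n →ₗ[ℂ] PolyY m n :=
  Algebra.linearMap ℂ (PolyY m n) ∘ₗ lcoeff ℂ 0

lemma polyInv_comp_polyNumber :
    polyInv m n ∘ₗ polyNumber m n = LinearMap.id - polyProj m n := by
  refine (MvPolynomial.basisMonomials (Fin m × Fin n) ℂ).ext fun d => ?_
  have hinv : polyInv m n (monomial d 1) = (d.degree : ℂ)⁻¹ • monomial d 1 := by
    have := (MvPolynomial.basisMonomials (Fin m × Fin n) ℂ).constr_basis ℂ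
      (fun d => (d.degree : ℂ)⁻¹ • (monomial d 1 : PolyY m n)) d
    simpa [polyInv] using this
  simp only [coe_basisMonomials, LinearMap.comp_apply, polyNumber_monomial, map_smul, hinv,
    LinearMap.sub_apply, LinearMap.id_apply, polyProj, lcoeff_apply, Algebra.linearMap_apply,
    coeff_monomial]
  by_cases hd : d = 0
  · subst hd; simp [monomial_zero']
  · have h : (d.degree : ℂ) ≠ 0 := by
      simpa [Finsupp.degree_eq_zero_iff] using hd
    rw [smul_smul, mul_inv_cancel₀ h, one_smul, if_neg hd, map_zero, sub_zero]

/-! ### The homotopy on cochains -/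

/-- `grassInv s` acting on `ℂ[y_{ij}, E_{ij}]`. -/
noncomputable def superInv (s : ℂ) : SuperRY m n →ₗ[ℂ] SuperRY m n :=
  TensorProduct.map LinearMap.id (grassInv m n s)

lemma opE_comp_grassInv (s : ℂ) :
    opEY m n ∘ₗ superInv m n s = superInv m n (s - 1) ∘ₗ opEY m n := by
  refine TensorProduct.ext' fun p w => ?_
  simp only [opEY, superInv, LinearMap.comp_apply, LinearMap.sum_apply, map_sum,
    TensorProduct.map_tmul, LinearMap.id_apply]
  refine Finset.sum_congr rfl fun a _ => ?_
  congr 1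
  exact LinearMap.congr_fun (EgenY_mul_grassInv m n a s) w

lemma opH2Y_comp_superInv (s : ℂ) :
    opH2Y m n ∘ₗ superInv m n s = superInv m n s ∘ₗ opH2Y m n := by
  rw [opH2Y_eq, superInv, ← TensorProduct.map_comp, ← TensorProduct.map_comp]
  simp

/-- `δ = -e ⊗ id`, with the sign written as the scalar `-1` because `Neg` does not synthesize on
linear endomorphisms of `CochainY`. -/
lemma deltaY_apply (c : CochainY m n K0) :
    deltaY m n K0 c = (opEY m n).rTensor K0 ((-1 : ℂ) • c) := by
  have h : -opEY m n = (-1 : ℂ) • opEY m n := by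
    refine LinearMap.ext fun x => ?_
    rw [LinearMap.neg_apply, LinearMap.smul_apply, neg_one_smul]
  rw [deltaY, h, map_smul]
  exact LinearMap.congr_fun (LinearMap.rTensor_smul K0 (-1 : ℂ) (opEY m n)) c

lemma mem_cocyclesY_iff (i : ℕ) (c : CochainY m n K0) :
    c ∈ cocyclesY m n K0 i ↔
      (opEY m n).rTensor K0 c = 0 ∧ (opH2Y m n).rTensor K0 c = (i : ℂ) • c := by
  rw [cocyclesY, Submodule.mem_inf, LinearMap.mem_ker, deltaY_apply, map_smul,
    smul_eq_zero_iff_right (by norm_num)]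
  rfl

lemma mem_range_deltaY_of_opE (c : CochainY m n K0) :
    (opEY m n).rTensor K0 c ∈ LinearMap.range (deltaY m n K0) := by
  exact ⟨(-1 : ℂ) • c, by rw [deltaY_apply, smul_smul]; norm_num⟩

/-- On cocycles of `y`-degree `i`, the operator `(h₁ + i) ∘ grassInv s` takes values in
coboundaries. -/
lemma homotopy_mem_range (i : ℕ) (s : ℂ) {c : CochainY m n K0} (hc : c ∈ cocyclesY m n K0 i) :
    (TensorProduct.map (LinearMap.id : PolyY m n →ₗ[ℂ] PolyY m n)
      ((grassNumber m n + (i : ℂ) • LinearMap.id) ∘ₗ grassInv m n s)).rTensor K0 c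
      ∈ LinearMap.range (deltaY m n K0) := by
  rw [mem_cocyclesY_iff] at hc
  obtain ⟨he, hh⟩ := hc
  set c' := (superInv m n s).rTensor K0 c with hc'
  have he' : (opEY m n).rTensor K0 c' = 0 := by
    rw [hc', ← LinearMap.rTensor_comp_apply, opE_comp_grassInv, LinearMap.rTensor_comp_apply, he,
      map_zero]
  have hh' : (opH2Y m n).rTensor K0 c' = (i : ℂ) • c' := by
    rw [hc', ← LinearMap.rTensor_comp_apply, opH2Y_comp_superInv, LinearMap.rTensor_comp_apply, hh,
      map_smul]
  have key := LinearMap.congr_fun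
    (congrArg (fun T : SuperRY m n →ₗ[ℂ] SuperRY m n => T.rTensor K0) (opE_opF_anticomm m n)) c'
  simp only [LinearMap.rTensor_add, LinearMap.add_apply, LinearMap.rTensor_comp_apply, he', hh',
    map_zero, add_zero] at key
  have hsplit : TensorProduct.map (LinearMap.id : PolyY m n →ₗ[ℂ] PolyY m n)
      ((grassNumber m n + (i : ℂ) • LinearMap.id) ∘ₗ grassInv m n s)
      = (opH1Y m n + (i : ℂ) • LinearMap.id) ∘ₗ superInv m n s := by
    rw [opH1Y_eq, superInv]
    refine TensorProduct.ext' fun p w => ?_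
    simp [TensorProduct.tmul_add]
  have hfin : (TensorProduct.map (LinearMap.id : PolyY m n →ₗ[ℂ] PolyY m n)
      ((grassNumber m n + (i : ℂ) • LinearMap.id) ∘ₗ grassInv m n s)).rTensor K0 c
      = (opEY m n).rTensor K0 ((opFY m n).rTensor K0 c') := by
    rw [hsplit, LinearMap.rTensor_comp_apply, ← hc', key]
    simp [LinearMap.rTensor_add, LinearMap.rTensor_smul]
  rw [hfin]
  exact mem_range_deltaY_of_opE m n K0 _

/-- Cochains of `y`-degree `0` are constant in `y`. -/
lemma constant_part_of_degree_zero {c : CochainY m n K0}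
    (hc : (opH2Y m n).rTensor K0 c = 0) :
    (TensorProduct.map (polyProj m n) (LinearMap.id : GrassY m n →ₗ[ℂ] GrassY m n)).rTensor K0 c
      = c := by
  have h : (TensorProduct.map (polyInv m n)
      (LinearMap.id : GrassY m n →ₗ[ℂ] GrassY m n)) ∘ₗ opH2Y m n
      + TensorProduct.map (polyProj m n) LinearMap.id = LinearMap.id := by
    rw [opH2Y_eq, ← TensorProduct.map_comp, polyInv_comp_polyNumber, LinearMap.comp_id,
      ← TensorProduct.map_add_left, sub_add_cancel, TensorProduct.map_id]
  have h' := LinearMap.congr_fun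
    (congrArg (fun T : SuperRY m n →ₗ[ℂ] SuperRY m n => T.rTensor K0) h) c
  simpa only [LinearMap.rTensor_add, LinearMap.add_apply, LinearMap.rTensor_comp_apply, hc,
    map_zero, zero_add, LinearMap.rTensor_id, LinearMap.id_apply] using h'

/-- The map `ℂ[y_{ij}, E_{ij}] → ℂ` taking the constant term in both kinds of variables. -/
noncomputable def superAug : SuperRY m n →ₗ[ℂ] ℂ :=
  TensorProduct.lid ℂ ℂ ∘ₗ
    TensorProduct.map (lcoeff ℂ 0) (ExteriorAlgebra.algebraMapInv (R := ℂ)).toLinearMap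

/-- The map `ℂ[y_{ij}, E_{ij}] ⊗ K0 → K0` induced by `superAug`. -/
noncomputable def cochainAug : CochainY m n K0 →ₗ[ℂ] K0 :=
  TensorProduct.lid ℂ K0 ∘ₗ (superAug m n).rTensor K0

lemma cochainAug_opE (c : CochainY m n K0) :
    cochainAug m n K0 ((opEY m n).rTensor K0 c) = 0 := by
  have h : superAug m n ∘ₗ opEY m n = 0 := by
    refine TensorProduct.ext' fun p w => ?_
    simp [superAug, opEY, algebraMapInv_EgenY_mul]
  rw [cochainAug, LinearMap.comp_apply, ← LinearMap.rTensor_comp_apply, h]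
  simp

lemma proj_eq_one_tmul_cochainAug (c : CochainY m n K0) :
    (TensorProduct.map (polyProj m n) (grassProj m n)).rTensor K0 c
      = ((1 : PolyY m n) ⊗ₜ[ℂ] (1 : GrassY m n)) ⊗ₜ[ℂ] cochainAug m n K0 c := by
  induction c using TensorProduct.induction_on with
  | zero => simp
  | add x y hx hy => rw [map_add, map_add, TensorProduct.tmul_add, hx, hy]
  | tmul r k =>
    induction r using TensorProduct.induction_on with
    | zero => simp
    | add x y hx hy => rw [TensorProduct.add_tmul, map_add, map_add, TensorProduct.tmul_add, hx, hy]
    | tmul p w =>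
      simp [polyProj, grassProj, cochainAug, superAug, Algebra.algebraMap_eq_smul_one,
        TensorProduct.smul_tmul', TensorProduct.tmul_smul, smul_smul, mul_comm,
        -MvPolynomial.algebraMap_eq]

/-- A degree `0` cocycle is cohomologous to its constant term. -/
lemma exists_add_one_tmul_eq {c : CochainY m n K0} (hc : c ∈ cocyclesY m n K0 0) :
    ∃ b ∈ LinearMap.range (deltaY m n K0),
      b + ((1 : PolyY m n) ⊗ₜ[ℂ] (1 : GrassY m n)) ⊗ₜ[ℂ] cochainAug m n K0 c = c := by
  have h := homotopy_mem_range m n K0 0 0 hc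
  have hh : (opH2Y m n).rTensor K0 c = 0 := by
    simpa using ((mem_cocyclesY_iff m n K0 0 c).mp hc).2
  rw [Nat.cast_zero, zero_smul, add_zero, grassNumber_comp_grassInv_zero] at h
  have hsplit : TensorProduct.map (LinearMap.id : PolyY m n →ₗ[ℂ] PolyY m n)
      (LinearMap.id - grassProj m n) + TensorProduct.map LinearMap.id (grassProj m n)
      = LinearMap.id := by
    rw [← TensorProduct.map_add_right, sub_add_cancel, TensorProduct.map_id]
  have hproj : TensorProduct.map (polyProj m n) (grassProj m n)
      = TensorProduct.map LinearMap.id (grassProj m n) ∘ₗ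
        TensorProduct.map (polyProj m n) LinearMap.id := by
    rw [← TensorProduct.map_comp]
    simp
  refine ⟨_, h, ?_⟩
  rw [← proj_eq_one_tmul_cochainAug, hproj, LinearMap.rTensor_comp_apply,
    constant_part_of_degree_zero m n K0 hh]
  rw [← LinearMap.add_apply, ← LinearMap.rTensor_add, hsplit, LinearMap.rTensor_id,
    LinearMap.id_apply]

lemma one_tmul_mem_cocyclesY (k : K0) :
    ((1 : PolyY m n) ⊗ₜ[ℂ] (1 : GrassY m n)) ⊗ₜ[ℂ] k ∈ cocyclesY m n K0 0 := by
  rw [mem_cocyclesY_iff]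
  constructor
  · simp [opEY, LinearMap.sum_apply]
  · simp [opH2Y, LinearMap.sum_apply]

/-- Mixed `u`-cohomology of the Kac module on the dual Fock space (Section 4.3.2 of the
paper).  The operators `e, f, h₁, h₂` satisfy the `gl(1|1)` relation `ef + fe = h₁ + h₂`,
and the cohomology of `δ = -e ⊗ id` is `H⁰_{Πu*}(u,K) ≅ K̄⁰_λ` (represented by `K0`) in
degree `0`, and `H^{-i}_{Πu*}(u,K) = 0` for all `i > 0` (every cocycle of `y`-degree `i > 0`
is a coboundary). -/
theorem mixed_u_cohomology_kac_module_dualFock :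
    opEY m n ∘ₗ opFY m n + opFY m n ∘ₗ opEY m n = opH1Y m n + opH2Y m n ∧
    -- `H⁰ ≅ K̄⁰_λ`: there is a surjection from the degree-0 cocycles onto `K0` whose
    -- kernel is exactly the space of coboundaries, i.e. `Z⁰/B⁰ ≅ K0`:
    (∃ φ : ↥(cocyclesY m n K0 0) →ₗ[ℂ] K0, Function.Surjective φ ∧
      LinearMap.ker φ =
        (LinearMap.range (deltaY m n K0)).comap (cocyclesY m n K0 0).subtype) ∧
    (∀ i : ℕ, 0 < i → cocyclesY m n K0 i ≤ LinearMap.range (deltaY m n K0)) := by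
  refine ⟨opE_opF_anticomm m n,
    ⟨cochainAug m n K0 ∘ₗ (cocyclesY m n K0 0).subtype, ?_, ?_⟩, ?_⟩
  · intro k
    refine ⟨⟨_, one_tmul_mem_cocyclesY m n K0 k⟩, ?_⟩
    simp [cochainAug, superAug]
  · ext ⟨c, hc⟩
    simp only [LinearMap.mem_ker, LinearMap.comp_apply, Submodule.subtype_apply,
      Submodule.mem_comap]
    constructor
    · intro h0
      obtain ⟨b, hb, h⟩ := exists_add_one_tmul_eq m n K0 hc
      rw [h0, TensorProduct.tmul_zero, add_zero] at h
      exact h ▸ hb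
    · rintro ⟨b, rfl⟩
      rw [deltaY_apply, cochainAug_opE]
  · intro i hi c hc
    have h := homotopy_mem_range m n K0 i i hc
    rwa [grassNumber_add_comp_grassInv m n hi, TensorProduct.map_id, LinearMap.rTensor_id,
      LinearMap.id_apply] at h
end
end
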